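/- Let Λ = KQ/⟨all paths of length L+1⟩ be a truncated path algebra over an algebraically closed field whose quiver Q has no oriented cycles, and let d be a dimension vector. Let S be a d-dimensional semisimple sequence and S* the generic socle layering of the modules in Rep S. Then the closure of Rep S is an irreducible component of Rep_d(Λ) if and only if (S, S*) is a minimal element of the set {(Ŝ, Ŝ*) : Ŝ ∈ Seq(d) is realizable and Ŝ* is the generic socle layering of Rep Ŝ}, ordered componentwise by dominance. Moreover, the situation is symmetric in S and S*: whenever (S, S*) is a minimal element of the image of Θ, then S* is the generic socle layering of Rep S, and S is the generic radical layering of the modules with socle layering S*. -/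

import Mathlib

open Finset

/-! # Varieties of representations of a quiver with relations: basic setup -/

/-- The Zariski topology on the affine space `ι → K`: it is generated by the basic open
sets `D(p) = {x | p(x) ≠ 0}`, where `p` ranges over multivariate polynomials. -/
def zariskiTopology (ι K : Type) [CommSemiring K] : TopologicalSpace (ι → K) :=
  TopologicalSpace.generateFrom
    {U | ∃ p : MvPolynomial ι K, U = {x | MvPolynomial.eval x p ≠ 0}}

/-- A finite quiver `Q`: vertices `Fin n`, arrows `Fin numArrows` with source and
target maps. -/
structure QuiverData where
  n : ℕ
  numArrows : ℕ
  src : Fin numArrows → Fin n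
  tgt : Fin numArrows → Fin n

namespace QuiverData

variable (Q : QuiverData) (d : Fin Q.n → ℕ) (K : Type) [Field K]

/-- Index of the coordinates of the affine space of `d`-dimensional representations:
for each arrow `a` a matrix entry index in `Fin (d (tgt a)) × Fin (d (src a))`. -/
abbrev Coords := Σ a : Fin Q.numArrows, Fin (d (Q.tgt a)) × Fin (d (Q.src a))

/-- The affine space of `d`-dimensional representations of `Q`:
a point `x` assigns to each arrow `a` a `d (tgt a) × d (src a)` matrix over `K`. -/
abbrev RepSpace := Coords Q d → K

/-- `RepSpace` carries the Zariski topology. -/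
noncomputable instance instRepTop : TopologicalSpace (RepSpace Q d K) :=
  zariskiTopology (Coords Q d) K

/-- The underlying `K`-vector space `⊕ᵢ K^{dᵢ}` of any `d`-dimensional representation. -/
abbrev Carrier := (Σ i : Fin Q.n, Fin (d i)) → K

/-- The projection onto the component of the `i`-th vertex (action of the primitive
idempotent `eᵢ`). -/
def proj (i : Fin Q.n) : Carrier Q d K →ₗ[K] Carrier Q d K where
  toFun m := fun jv => if jv.1 = i then m jv else 0
  map_add' u v := by
    funext jv; by_cases h : jv.1 = i <;> simp [h]
  map_smul' c u := by
    funext jv; by_cases h : jv.1 = i <;> simp [h]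

/-- The action of the arrow `a` on the carrier space of the representation `x`. -/
noncomputable def arrowMap (x : RepSpace Q d K) (a : Fin Q.numArrows) :
    Carrier Q d K →ₗ[K] Carrier Q d K where
  toFun m := fun jv =>
    if h : jv.1 = Q.tgt a then
      ∑ w : Fin (d (Q.src a)), x ⟨a, (Fin.cast (congrArg d h) jv.2, w)⟩ * m ⟨Q.src a, w⟩
    else 0
  map_add' u v := by
    funext jv
    by_cases h : jv.1 = Q.tgt a <;> simp [h, mul_add, Finset.sum_add_distrib]
  map_smul' c u := by
    funext jv
    by_cases h : jv.1 = Q.tgt a <;>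
      simp [h, Finset.mul_sum, mul_comm, mul_left_comm, mul_assoc]

/-- The action of a word `w = [a_k, …, a_1]` of arrows on the representation `x`
(the arrow `a_1` acts first; non-composable words act as `0`). -/
noncomputable def wordMap (x : RepSpace Q d K) (w : List (Fin Q.numArrows)) :
    Module.End K (Carrier Q d K) :=
  (w.map fun a => (arrowMap Q d K x a : Module.End K (Carrier Q d K))).prod

/-- The submodule `J^l · M_x` of the module `M_x`: the sum of the images of all words of
arrows of length `l` (for an admissible ideal, the radical acts through the arrows). -/
noncomputable def radPow (x : RepSpace Q d K) (l : ℕ) : Submodule K (Carrier Q d K) :=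
  ⨆ w : {w : List (Fin Q.numArrows) // w.length = l},
    LinearMap.range (wordMap Q d K x w.1)

/-- The socle series of `M_x`: `socPow x l = soc_l(M_x)`. -/
noncomputable def socPow (x : RepSpace Q d K) : ℕ → Submodule K (Carrier Q d K)
  | 0 => ⨅ a, LinearMap.ker (arrowMap Q d K x a)
  | (l+1) => ⨅ a, (socPow x l).comap (arrowMap Q d K x a)

/-- The dimension, at the vertex `i`, of a (vertex-graded) subspace `N`. -/
noncomputable def vdim (N : Submodule K (Carrier Q d K)) (i : Fin Q.n) : ℕ :=
  Module.finrank K (N.map (proj Q d K i))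

/-- The radical layering `S(M_x) = (M/JM, JM/J²M, …, J^L M/J^{L+1} M)` of the module `M_x`,
recorded through the dimension vectors of its semisimple layers. -/
noncomputable def radLayering (L : ℕ) (x : RepSpace Q d K) :
    Fin (L+1) → Fin Q.n → ℕ :=
  fun l i => vdim Q d K (radPow Q d K x l) i - vdim Q d K (radPow Q d K x (l+1)) i

/-- The socle layering `S*(M_x) = (soc₀M, soc₁M/soc₀M, …)` of the module `M_x`, recorded
through the dimension vectors of its semisimple layers. -/
noncomputable def socLayering (L : ℕ) (x : RepSpace Q d K) :
    Fin (L+1) → Fin Q.n → ℕ :=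
  fun l i => vdim Q d K (socPow Q d K x l) i -
    (if (l : ℕ) = 0 then 0 else vdim Q d K (socPow Q d K x ((l : ℕ) - 1)) i)

end QuiverData

/-- The dominance order on semisimple sequences (recorded as sequences of dimension
vectors): `dominates S S'` means `S ≤ S'`, i.e. `⊕_{j≤l} S_j ⊆ ⊕_{j≤l} S'_j` for all `l`. -/
def dominates {n L : ℕ} (S S' : Fin (L+1) → Fin n → ℕ) : Prop :=
  ∀ (l : Fin (L+1)) (i : Fin n),
    ∑ j ∈ Finset.univ.filter (fun j => j ≤ l), S j i ≤
      ∑ j ∈ Finset.univ.filter (fun j => j ≤ l), S' j i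

/-- A semisimple sequence has dimension vector `d` if its layers' dimension vectors sum
to `d`. -/
def hasDimVec {n L : ℕ} (S : Fin (L+1) → Fin n → ℕ) (d : Fin n → ℕ) : Prop :=
  ∀ i, ∑ l, S l i = d i

namespace QuiverData

variable (Q : QuiverData) (d : Fin Q.n → ℕ) (K : Type) [Field K]

/-- Evaluation of a formal noncommutative polynomial in the vertices (`Sum.inl`) and
arrows (`Sum.inr`) of `Q` on the representation `x`; an element of the path algebra `KQ`
is represented by such a polynomial. -/
noncomputable def evalRel (x : RepSpace Q d K) :
    FreeAlgebra K (Fin Q.n ⊕ Fin Q.numArrows) →ₐ[K] Module.End K (Carrier Q d K) :=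
  FreeAlgebra.lift K
    (Sum.elim (fun i => (proj Q d K i : Module.End K (Carrier Q d K)))
      (fun a => (arrowMap Q d K x a : Module.End K (Carrier Q d K))))

/-- The affine variety `Rep_d(Λ)` for `Λ = KQ/I`, where the ideal `I` is generated by the
set `R` of relations: the set of points of `RepSpace` annihilating every relation. -/
def RepVar (R : Set (FreeAlgebra K (Fin Q.n ⊕ Fin Q.numArrows))) :
    Set (RepSpace Q d K) :=
  {x | ∀ r ∈ R, evalRel Q d K x r = 0}

/-- The affine variety `Rep_d(Λ)` for the truncated path algebra
`Λ = KQ/⟨all paths of length L+1⟩`. -/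
def TruncRepVar (L : ℕ) : Set (RepSpace Q d K) :=
  {x | ∀ w : List (Fin Q.numArrows), w.length = L + 1 → wordMap Q d K x w = 0}

/-- A submodule of `M_x`, i.e. a subspace stable under the arrows and the vertex
idempotents. -/
def Stable (x : RepSpace Q d K) (N : Submodule K (Carrier Q d K)) : Prop :=
  (∀ a, N.map (arrowMap Q d K x a) ≤ N) ∧ ∀ i, N.map (proj Q d K i) ≤ N

/-- A submodule `N` of `M_x` is indecomposable (as a module). -/
def IndecompSub (x : RepSpace Q d K) (N : Submodule K (Carrier Q d K)) : Prop :=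
  N ≠ ⊥ ∧ ∀ N₁ N₂ : Submodule K (Carrier Q d K),
    Stable Q d K x N₁ → Stable Q d K x N₂ → N₁ ≤ N → N₂ ≤ N →
    N₁ ⊔ N₂ = N → N₁ ⊓ N₂ = ⊥ → N₁ = ⊥ ∨ N₂ = ⊥

/-- The module `M_x` is indecomposable. -/
def IndecompRep (x : RepSpace Q d K) : Prop :=
  IndecompSub Q d K x ⊤

/-- The module `M_x` is uniserial: its submodules form a chain. -/
def UniserialRep (x : RepSpace Q d K) : Prop :=
  ∀ N₁ N₂ : Submodule K (Carrier Q d K),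
    Stable Q d K x N₁ → Stable Q d K x N₂ → N₁ ≤ N₂ ∨ N₂ ≤ N₁

/-- `M_x` decomposes as a direct sum of `s` indecomposable submodules whose dimension
vectors are `D 0, …, D (s-1)`. -/
def DecompWith (x : RepSpace Q d K) (s : ℕ) (D : Fin s → Fin Q.n → ℕ) : Prop :=
  ∃ N : Fin s → Submodule K (Carrier Q d K),
    (∀ r, Stable Q d K x (N r)) ∧
    (∀ r, Disjoint (N r) (⨆ t, ⨆ (_ : t ≠ r), N t)) ∧
    (⨆ r, N r) = ⊤ ∧
    (∀ r, IndecompSub Q d K x (N r)) ∧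
    ∀ r i, vdim Q d K (N r) i = D r i

/-- A homomorphism of representations `M_x → M_y` (for possibly different dimension
vectors): a linear map commuting with the arrow actions and the vertex projections. -/
def RepHom (dx dy : Fin Q.n → ℕ) (x : RepSpace Q dx K) (y : RepSpace Q dy K)
    (φ : Carrier Q dx K →ₗ[K] Carrier Q dy K) : Prop :=
  (∀ a, φ ∘ₗ arrowMap Q dx K x a = arrowMap Q dy K y a ∘ₗ φ) ∧
  ∀ i, φ ∘ₗ proj Q dx K i = proj Q dy K i ∘ₗ φ

/-- The submodule `N` of `M_x` is isomorphic, as a representation, to `M_y`. -/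
def SubrepIso (dy : Fin Q.n → ℕ) (x : RepSpace Q d K)
    (N : Submodule K (Carrier Q d K)) (y : RepSpace Q dy K) : Prop :=
  ∃ φ : Carrier Q d K →ₗ[K] Carrier Q dy K,
    N ⊓ LinearMap.ker φ = ⊥ ∧ N.map φ = ⊤ ∧
    (∀ a, ∀ m ∈ N, φ (arrowMap Q d K x a m) = arrowMap Q dy K y a (φ m)) ∧
    (∀ i, ∀ m ∈ N, φ (proj Q d K i m) = proj Q dy K i (φ m))

/-- The representations `M_x` and `M_y` are isomorphic; the isomorphism classes are
exactly the orbits of the `GL(d)`-action. -/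
def IsoRep (x y : RepSpace Q d K) : Prop :=
  ∃ φ : Carrier Q d K ≃ₗ[K] Carrier Q d K,
    (∀ a m, φ (arrowMap Q d K x a m) = arrowMap Q d K y a (φ m)) ∧
    ∀ i m, φ (proj Q d K i m) = proj Q d K i (φ m)

/-- The `GL(d)`-orbit of the point `x`, i.e. the set of points encoding modules
isomorphic to `M_x`. -/
def orbitSet (x : RepSpace Q d K) : Set (RepSpace Q d K) :=
  {y | IsoRep Q d K x y}

/-- Given a family `P` of varieties `Rep_dv(Λ)` (one for every dimension vector `dv`),
`Ext¹_Λ(M_x, M_y) = 0`: every extension `0 → M_y → E → M_x → 0` of `Λ`-modules splits. -/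
def Ext1Zero (P : ∀ dv : Fin Q.n → ℕ, Set (RepSpace Q dv K))
    (dx dy : Fin Q.n → ℕ) (x : RepSpace Q dx K) (y : RepSpace Q dy K) : Prop :=
  ∀ z ∈ P (fun i => dx i + dy i),
    ∀ (ι : Carrier Q dy K →ₗ[K] Carrier Q (fun i => dx i + dy i) K)
      (π : Carrier Q (fun i => dx i + dy i) K →ₗ[K] Carrier Q dx K),
      RepHom Q K dy (fun i => dx i + dy i) y z ι →
      RepHom Q K (fun i => dx i + dy i) dx z x π →
      Function.Injective ι → Function.Surjective π →
      LinearMap.ker π = LinearMap.range ι →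
      ∃ σ : Carrier Q dx K →ₗ[K] Carrier Q (fun i => dx i + dy i) K,
        RepHom Q K dx (fun i => dx i + dy i) x z σ ∧ π ∘ₗ σ = LinearMap.id

/-- The direct sum `C₁ ⊕ ⋯ ⊕ C_s` of subvarieties `C_r ⊆ Rep_{D r}(Λ)`: the set of
points `x ∈ Rep_d(Λ)` whose module decomposes as `M_x ≅ ⊕_r M^{(r)}` with `M^{(r)}`
encoded by a point of `C_r`. -/
def DirectSumSet (s : ℕ) (D : Fin s → Fin Q.n → ℕ)
    (Cs : ∀ r : Fin s, Set (RepSpace Q (D r) K)) : Set (RepSpace Q d K) :=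
  {x | ∃ N : Fin s → Submodule K (Carrier Q d K),
    (∀ r, Stable Q d K x (N r)) ∧
    (∀ r, Disjoint (N r) (⨆ t, ⨆ (_ : t ≠ r), N t)) ∧
    (⨆ r, N r) = ⊤ ∧
    ∀ r, ∃ y ∈ Cs r, SubrepIso Q d K (D r) x (N r) y}

/-- The endomorphism space `End_Λ(M_x)` of the module `M_x`. -/
def endSpace (x : RepSpace Q d K) :
    Submodule K (Carrier Q d K →ₗ[K] Carrier Q d K) where
  carrier := {φ | RepHom Q K d d x x φ}
  add_mem' := by
    intro φ ψ hφ hψ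
    exact ⟨fun a => by rw [LinearMap.add_comp, LinearMap.comp_add, hφ.1 a, hψ.1 a],
      fun i => by rw [LinearMap.add_comp, LinearMap.comp_add, hφ.2 i, hψ.2 i]⟩
  zero_mem' := by
    exact ⟨fun a => by simp, fun i => by simp⟩
  smul_mem' := by
    intro c φ hφ
    exact ⟨fun a => by rw [LinearMap.smul_comp, LinearMap.comp_smul, hφ.1 a],
      fun i => by rw [LinearMap.smul_comp, LinearMap.comp_smul, hφ.2 i]⟩

/-- A word of arrows is a (composable) path when read in function-composition order. -/
def IsPathWord (w : List (Fin Q.numArrows)) : Prop :=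
  List.Chain' (fun a b => Q.src a = Q.tgt b) w

/-- The quiver `Q` has no oriented cycles. -/
def Acyclic : Prop :=
  ∀ (a : Fin Q.numArrows) (w : List (Fin Q.numArrows)),
    IsPathWord Q (a :: w) →
      Q.tgt a ≠ Q.src ((a :: w).getLast (List.cons_ne_nil a w))

/-- A filtration `M_x = F 0 ⊇ F 1 ⊇ ⋯ ⊇ F (L+1) = 0` by submodules which is governed by
the semisimple sequence `S`: each layer `F l / F (l+1)` is semisimple, isomorphic to `S l`. -/
def Governed (L : ℕ) (x : RepSpace Q d K) (S : Fin (L+1) → Fin Q.n → ℕ)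
    (F : Fin (L+2) → Submodule K (Carrier Q d K)) : Prop :=
  F 0 = ⊤ ∧ F (Fin.last (L+1)) = ⊥ ∧
  (∀ l : Fin (L+1), F l.succ ≤ F l.castSucc) ∧
  (∀ (l : Fin (L+2)) (i : Fin Q.n), (F l).map (proj Q d K i) ≤ F l) ∧
  (∀ (l : Fin (L+1)) (a : Fin Q.numArrows),
      (F l.castSucc).map (arrowMap Q d K x a) ≤ F l.succ) ∧
  ∀ (l : Fin (L+1)) (i : Fin Q.n),
      vdim Q d K (F l.castSucc) i = S l i + vdim Q d K (F l.succ) i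

/-- `Filt S`: the set of points whose module has a filtration governed by `S`. -/
def FiltSet (L : ℕ) (S : Fin (L+1) → Fin Q.n → ℕ) : Set (RepSpace Q d K) :=
  {x | ∃ F, Governed Q d K L x S F}

/-- `Γ(M_x)`: the number of semisimple sequences which are realizable (i.e. occur as the
radical layering of a module in the variety `P`) and which govern some filtration of `M_x`. -/
noncomputable def gammaCount (L : ℕ) (P : Set (RepSpace Q d K))
    (x : RepSpace Q d K) : ℕ :=
  Set.ncard {S : Fin (L+1) → Fin Q.n → ℕ |
    (∃ y ∈ P, radLayering Q d K L y = S) ∧ ∃ F, Governed Q d K L x S F}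

/-- `Sstar` is the generic (= minimal, attained) socle layering of the modules in `W`. -/
def GenSoc (L : ℕ) (W : Set (RepSpace Q d K))
    (Sstar : Fin (L+1) → Fin Q.n → ℕ) : Prop :=
  (∀ x ∈ W, dominates Sstar (socLayering Q d K L x)) ∧
  ∃ x ∈ W, socLayering Q d K L x = Sstar

end QuiverData

namespace QuiverData

variable (Q : QuiverData)

/-- The `i`-th entry of the row vector `e·A` (over `ℤ`), where `A` is the adjacency
matrix of `Q`: the sum of `e (src a)` over all arrows `a` ending at `i`. -/
def inflowZ (e : Fin Q.n → ℤ) (i : Fin Q.n) : ℤ :=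
  ∑ a ∈ Finset.univ.filter (fun a => Q.tgt a = i), e (Q.src a)

/-- The `i`-th entry of the row vector `e·B` (over `ℤ`), where `B` is the transpose of
the adjacency matrix of `Q`. -/
def outflowZ (e : Fin Q.n → ℤ) (i : Fin Q.n) : ℤ :=
  ∑ a ∈ Finset.univ.filter (fun a => Q.src a = i), e (Q.tgt a)

/-- Partial sums `t⁽⁰⁾ + ⋯ + t⁽ˡ⁾` of the recursion
`t⁽⁰⁾ = sup{0, d − d·A}`, `t⁽ˡ⁺¹⁾ = sup{0, (d − ∑_{k≤l} t⁽ᵏ⁾) − (d − ∑_{k≤l} t⁽ᵏ⁾)·A}`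
(computed componentwise). -/
def cumLayer (dz : Fin Q.n → ℤ) : ℕ → Fin Q.n → ℤ
  | 0 => fun i => max 0 (dz i - inflowZ Q dz i)
  | (l+1) => fun i =>
      cumLayer dz l i +
        max 0 ((dz i - cumLayer dz l i) -
          inflowZ Q (fun j => dz j - cumLayer dz l j) i)

/-- The positive part `∑ᵢ eᵢ fᵢ` of the Euler form of `Q`. -/
def eulerHomPart (e f : Fin Q.n → ℕ) : ℕ := ∑ i, e i * f i

/-- The negative part `∑_{α} e_{src α} f_{tgt α}` of the Euler form of `Q`, so that
`⟨e, f⟩ = eulerHomPart e f − eulerExtPart e f`. -/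
def eulerExtPart (e f : Fin Q.n → ℕ) : ℕ :=
  ∑ a, e (Q.src a) * f (Q.tgt a)

end QuiverData

/-- The quiver with a single vertex and `r` loops. -/
def QuiverData.loopQuiver (r : ℕ) : QuiverData :=
  ⟨1, r, fun _ => 0, fun _ => 0⟩

namespace QuiverData

variable (Q : QuiverData) (d : Fin Q.n → ℕ) (K : Type) [Field K]

/-- The variety `Rep_d(Λ)` for `Λ = KQ/⟨Rels⟩`, regarded as a topological space with the
(subspace) Zariski topology. -/
abbrev GenV (Rels : Set (FreeAlgebra K (Fin Q.n ⊕ Fin Q.numArrows))) :=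
  {y : RepSpace Q d K // y ∈ RepVar Q d K Rels}

/-- The variety `Rep_d(Λ)` for the truncated path algebra
`Λ = KQ/⟨paths of length L+1⟩`, regarded as a topological space. -/
abbrev TruncV (L : ℕ) := {y : RepSpace Q d K // y ∈ TruncRepVar Q d K L}

end QuiverData

namespace QuiverData
section Basics
variable {Q : QuiverData} {d : Fin Q.n → ℕ} {K : Type} [Field K]

theorem proj_apply (i : Fin Q.n) (m : Carrier Q d K) (jv : Σ i : Fin Q.n, Fin (d i)) :
    proj Q d K i m jv = if jv.1 = i then m jv else 0 := rfl

theorem arrowMap_apply (x : RepSpace Q d K) (a : Fin Q.numArrows) (m : Carrier Q d K)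
    (v : Fin (d (Q.tgt a))) :
    arrowMap Q d K x a m ⟨Q.tgt a, v⟩ =
      ∑ w : Fin (d (Q.src a)), x ⟨a, (v, w)⟩ * m ⟨Q.src a, w⟩ := by
  simp [arrowMap]

theorem arrowMap_apply_ne (x : RepSpace Q d K) (a : Fin Q.numArrows) (m : Carrier Q d K)
    (jv : Σ i : Fin Q.n, Fin (d i)) (h : jv.1 ≠ Q.tgt a) :
    arrowMap Q d K x a m jv = 0 := by
  simp [arrowMap, h]

theorem arrowMap_apply_self (x : RepSpace Q d K) (a : Fin Q.numArrows) (m : Carrier Q d K) :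
    arrowMap Q d K x a (proj Q d K (Q.src a) m) = arrowMap Q d K x a m := by
  funext jv
  simp [arrowMap, proj_apply]

theorem arrowMap_proj_ne (x : RepSpace Q d K) (a : Fin Q.numArrows) (m : Carrier Q d K)
    (i : Fin Q.n) (h : Q.src a ≠ i) :
    arrowMap Q d K x a (proj Q d K i m) = 0 := by
  funext jv
  simp [arrowMap, proj_apply, h]

theorem proj_arrowMap (x : RepSpace Q d K) (a : Fin Q.numArrows) (m : Carrier Q d K) :
    proj Q d K (Q.tgt a) (arrowMap Q d K x a m) = arrowMap Q d K x a m := by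
  funext jv
  by_cases h : jv.1 = Q.tgt a
  · simp [proj_apply, h]
  · simp [proj_apply, h, arrowMap_apply_ne]

theorem proj_arrowMap_ne (x : RepSpace Q d K) (a : Fin Q.numArrows) (m : Carrier Q d K)
    (i : Fin Q.n) (h : Q.tgt a ≠ i) :
    proj Q d K i (arrowMap Q d K x a m) = 0 := by
  funext jv
  by_cases h' : jv.1 = i
  · subst h'
    simp [proj_apply, arrowMap_apply_ne, h.symm]
  · simp [proj_apply, h']

theorem proj_proj (i : Fin Q.n) (m : Carrier Q d K) :
    proj Q d K i (proj Q d K i m) = proj Q d K i m := by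
  funext jv
  simp +contextual [proj_apply]

theorem proj_proj_ne (i j : Fin Q.n) (h : i ≠ j) (m : Carrier Q d K) :
    proj Q d K i (proj Q d K j m) = 0 := by
  funext jv
  simp only [proj_apply, Pi.zero_apply]
  split_ifs with h1 h2
  · exact absurd (h1.symm.trans h2) h
  · rfl
  · rfl

theorem sum_proj (m : Carrier Q d K) : ∑ i, proj Q d K i m = m := by
  funext jv
  simp [Finset.sum_apply, proj_apply]

/-- Build a representation from arbitrary endomorphisms, keeping the relevant blocks. -/
noncomputable def ofEnd (B : Fin Q.numArrows → (Carrier Q d K →ₗ[K] Carrier Q d K)) :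
    RepSpace Q d K :=
  fun c => B c.1 (Pi.single ⟨Q.src c.1, c.2.2⟩ 1) ⟨Q.tgt c.1, c.2.1⟩

theorem proj_eq_sum (i : Fin Q.n) (m : Carrier Q d K) :
    proj Q d K i m = ∑ w : Fin (d i), m ⟨i, w⟩ • (Pi.single ⟨i, w⟩ 1 : Carrier Q d K) := by
  funext ⟨j, v⟩
  simp only [proj_apply, Finset.sum_apply, Pi.smul_apply, smul_eq_mul]
  split_ifs with h
  · subst h
    rw [Finset.sum_eq_single v]
    · simp
    · intro b _ hb
      rw [Pi.single_eq_of_ne, mul_zero]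
      intro h
      apply hb
      simpa using h.symm
    · simp
  · symm
    apply Finset.sum_eq_zero
    intro w _
    rw [Pi.single_eq_of_ne, mul_zero]
    intro h'
    exact h (congrArg Sigma.fst h')

theorem arrowMap_ofEnd (B : Fin Q.numArrows → (Carrier Q d K →ₗ[K] Carrier Q d K))
    (a : Fin Q.numArrows) (m : Carrier Q d K) :
    arrowMap Q d K (ofEnd B) a m
      = proj Q d K (Q.tgt a) (B a (proj Q d K (Q.src a) m)) := by
  funext ⟨j, v⟩
  by_cases h : j = Q.tgt a
  · subst h
    rw [arrowMap_apply, proj_apply, if_pos rfl, proj_eq_sum, map_sum, Finset.sum_apply]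
    apply Finset.sum_congr rfl
    intro w _
    simp [ofEnd, mul_comm]
  · rw [arrowMap_apply_ne _ _ _ _ h, proj_apply, if_neg h]

theorem arrowMap_single (x : RepSpace Q d K) (c : Coords Q d) :
    arrowMap Q d K x c.1 (Pi.single ⟨Q.src c.1, c.2.2⟩ 1) ⟨Q.tgt c.1, c.2.1⟩ = x c := by
  rw [arrowMap_apply, Finset.sum_eq_single c.2.2]
  · simp
  · intro b _ hb
    rw [Pi.single_eq_of_ne, mul_zero]
    intro h
    exact hb (by simpa using h)
  · simp

theorem ofEnd_arrowMap (x : RepSpace Q d K) : ofEnd (arrowMap Q d K x) = x := by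
  funext c
  exact arrowMap_single x c

theorem arrowMap_lin (s t : K) (x y : RepSpace Q d K) (a : Fin Q.numArrows)
    (m : Carrier Q d K) :
    arrowMap Q d K (s • x + t • y) a m
      = s • arrowMap Q d K x a m + t • arrowMap Q d K y a m := by
  funext ⟨j, v⟩
  by_cases h : j = Q.tgt a
  · subst h
    simp only [Pi.add_apply, Pi.smul_apply, arrowMap_apply, smul_eq_mul, Finset.mul_sum,
      ← Finset.sum_add_distrib]
    apply Finset.sum_congr rfl
    intro w _
    ring
  · simp [arrowMap_apply_ne _ _ _ (⟨j, v⟩ : Σ i : Fin Q.n, Fin (d i)) h]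

/-! ### radical powers -/

theorem radPow_zero (x : RepSpace Q d K) : radPow Q d K x 0 = ⊤ := by
  rw [eq_top_iff]
  refine le_trans ?_ (le_iSup _ (⟨[], rfl⟩ : {w : List (Fin Q.numArrows) // w.length = 0}))
  intro m _
  exact ⟨m, by simp [wordMap]⟩

theorem wordMap_cons (x : RepSpace Q d K) (a : Fin Q.numArrows) (w : List (Fin Q.numArrows))
    (m : Carrier Q d K) :
    wordMap Q d K x (a :: w) m = arrowMap Q d K x a (wordMap Q d K x w m) := by
  simp [wordMap]

theorem radPow_succ (x : RepSpace Q d K) (l : ℕ) :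
    radPow Q d K x (l+1) = ⨆ a, (radPow Q d K x l).map (arrowMap Q d K x a) := by
  apply le_antisymm
  · refine iSup_le ?_
    rintro ⟨w, hw⟩
    match w, hw with
    | a :: w, hw =>
      have hw' : w.length = l := by simpa using hw
      refine le_trans ?_ (le_iSup _ a)
      rintro _ ⟨m, rfl⟩
      rw [wordMap_cons]
      refine Submodule.mem_map_of_mem ?_
      exact Submodule.mem_iSup_of_mem ⟨w, hw'⟩ ⟨m, rfl⟩
  · refine iSup_le fun a => ?_
    rw [radPow, Submodule.map_iSup]
    refine iSup_le ?_
    rintro ⟨w, hw⟩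
    rintro _ ⟨_, ⟨m, rfl⟩, rfl⟩
    refine Submodule.mem_iSup_of_mem ⟨a :: w, by simp [hw]⟩ ⟨m, ?_⟩
    rw [wordMap_cons]

theorem arrowMap_mem_radPow (x : RepSpace Q d K) (l : ℕ) (a : Fin Q.numArrows)
    {m : Carrier Q d K} (hm : m ∈ radPow Q d K x l) :
    arrowMap Q d K x a m ∈ radPow Q d K x (l+1) := by
  rw [radPow_succ]
  exact Submodule.mem_iSup_of_mem a (Submodule.mem_map_of_mem hm)

theorem radPow_anti_succ (x : RepSpace Q d K) (l : ℕ) :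
    radPow Q d K x (l+1) ≤ radPow Q d K x l := by
  induction l with
  | zero => rw [radPow_zero]; exact le_top
  | succ l ih =>
    rw [radPow_succ x (l+1)]
    refine iSup_le fun a => ?_
    rw [Submodule.map_le_iff_le_comap]
    intro m hm
    exact arrowMap_mem_radPow x l a (ih hm)

theorem radPow_antitone (x : RepSpace Q d K) : Antitone (radPow Q d K x) :=
  antitone_nat_of_succ_le (radPow_anti_succ x)

/-- Universal upper bound for radical powers. -/
theorem radPow_le_of (x : RepSpace Q d K) (F : ℕ → Submodule K (Carrier Q d K))
    (h0 : F 0 = ⊤) (hF : ∀ l a m, m ∈ F l → arrowMap Q d K x a m ∈ F (l+1)) (l : ℕ) :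
    radPow Q d K x l ≤ F l := by
  induction l with
  | zero => rw [h0]; exact le_top
  | succ l ih =>
    rw [radPow_succ]
    refine iSup_le fun a => ?_
    rw [Submodule.map_le_iff_le_comap]
    intro m hm
    exact hF l a m (ih hm)

theorem mem_trunc_iff (L : ℕ) (x : RepSpace Q d K) :
    x ∈ TruncRepVar Q d K L ↔ radPow Q d K x (L+1) = ⊥ := by
  constructor
  · intro h
    rw [eq_bot_iff]
    refine iSup_le ?_
    rintro ⟨w, hw⟩
    rintro _ ⟨m, rfl⟩
    simp [h w hw]
  · intro h w hw
    refine LinearMap.ext fun m => ?_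
    have : wordMap Q d K x w m ∈ radPow Q d K x (L+1) :=
      Submodule.mem_iSup_of_mem ⟨w, hw⟩ ⟨m, rfl⟩
    rw [h] at this
    simpa using this

/-- A graded subspace. -/
def Graded (N : Submodule K (Carrier Q d K)) : Prop :=
  ∀ i, ∀ m ∈ N, proj Q d K i m ∈ N

theorem radPow_graded (x : RepSpace Q d K) (l : ℕ) : Graded (radPow Q d K x l) := by
  cases l with
  | zero => intro i m _; rw [radPow_zero]; trivial
  | succ l =>
    intro i m hm
    rw [radPow_succ] at hm
    induction hm using Submodule.iSup_induction' with
    | mem a m hm =>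
      obtain ⟨u, hu, rfl⟩ := hm
      by_cases h : Q.tgt a = i
      · subst h
        rw [proj_arrowMap]
        exact arrowMap_mem_radPow x l a hu
      · rw [proj_arrowMap_ne _ _ _ _ h]
        exact Submodule.zero_mem _
    | zero => rw [map_zero]; exact Submodule.zero_mem _
    | add u v _ _ hu hv => rw [map_add]; exact Submodule.add_mem _ hu hv

/-! ### socle series -/

/-- The socle series, shifted by one. -/
noncomputable def soc' (x : RepSpace Q d K) : ℕ → Submodule K (Carrier Q d K)
  | 0 => ⊥
  | (l+1) => ⨅ a, (soc' x l).comap (arrowMap Q d K x a)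

theorem socPow_eq (x : RepSpace Q d K) (l : ℕ) : socPow Q d K x l = soc' x (l+1) := by
  induction l with
  | zero => simp [socPow, soc']
  | succ l ih => rw [socPow, soc', ih]

theorem mem_soc'_succ (x : RepSpace Q d K) (l : ℕ) (m : Carrier Q d K) :
    m ∈ soc' x (l+1) ↔ ∀ a, arrowMap Q d K x a m ∈ soc' x l := by
  simp [soc']

theorem soc'_mono_succ (x : RepSpace Q d K) (l : ℕ) : soc' x l ≤ soc' x (l+1) := by
  induction l with
  | zero => exact bot_le
  | succ l ih =>
    intro m hm
    rw [mem_soc'_succ] at hm ⊢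
    exact fun a => ih (hm a)

theorem soc'_mono (x : RepSpace Q d K) : Monotone (soc' x) :=
  monotone_nat_of_le_succ (soc'_mono_succ x)

theorem soc'_graded (x : RepSpace Q d K) (l : ℕ) : Graded (soc' x l) := by
  cases l with
  | zero =>
    intro i m hm
    have : m = 0 := hm
    rw [this, map_zero]; exact Submodule.zero_mem _
  | succ l =>
    intro i m hm
    rw [mem_soc'_succ] at hm ⊢
    intro a
    by_cases h : Q.src a = i
    · subst h
      rw [arrowMap_apply_self]; exact hm a
    · rw [arrowMap_proj_ne _ _ _ _ h]; exact Submodule.zero_mem _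

theorem radPow_le_soc' (x : RepSpace Q d K) (k : ℕ) : ∀ l, radPow Q d K x (l+k) = ⊥ →
    radPow Q d K x l ≤ soc' x k := by
  induction k with
  | zero => intro l h; exact h.le
  | succ k ih =>
    intro l h m hm
    rw [mem_soc'_succ]
    intro a
    exact ih (l+1) (by rw [← h]; congr 1; omega) (arrowMap_mem_radPow x l a hm)

/-! ### vertex dimensions -/

theorem Graded.map_proj_le {N : Submodule K (Carrier Q d K)} (hN : Graded N) (i : Fin Q.n) :
    N.map (proj Q d K i) ≤ N := by
  rintro _ ⟨m, hm, rfl⟩; exact hN i m hm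

theorem vdim_mono {N N' : Submodule K (Carrier Q d K)} (h : N ≤ N') (i : Fin Q.n) :
    vdim Q d K N i ≤ vdim Q d K N' i :=
  Submodule.finrank_mono (Submodule.map_mono h)

theorem vdim_bot (i : Fin Q.n) : vdim Q d K ⊥ i = 0 := by simp [vdim]

theorem mem_of_proj_mem {N : Submodule K (Carrier Q d K)} {m : Carrier Q d K}
    (h : ∀ i, proj Q d K i m ∈ N) : m ∈ N := by
  rw [← sum_proj m]
  exact Submodule.sum_mem _ fun i _ => h i

theorem eq_of_vdim_eq {N N' : Submodule K (Carrier Q d K)} (hN : Graded N) (h : N ≤ N')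
    (hd : ∀ i, vdim Q d K N' i ≤ vdim Q d K N i) : N = N' := by
  apply le_antisymm h
  intro m hm
  apply mem_of_proj_mem
  intro i
  have := Submodule.eq_of_le_of_finrank_le (Submodule.map_mono (f := proj Q d K i) h) (hd i)
  apply hN.map_proj_le i
  rw [this]
  exact Submodule.mem_map_of_mem hm

theorem eq_bot_of_vdim {N : Submodule K (Carrier Q d K)}
    (hd : ∀ i, vdim Q d K N i = 0) : N = ⊥ := by
  symm
  apply eq_of_vdim_eq _ bot_le
  · intro i; rw [hd i, vdim_bot]
  · intro i m hm
    have : m = 0 := hm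
    rw [this, map_zero]; exact Submodule.zero_mem _

/-- Inclusion of the component of a vertex. -/
def incl (i : Fin Q.n) : (Fin (d i) → K) →ₗ[K] Carrier Q d K where
  toFun u := fun jv => if h : jv.1 = i then u (Fin.cast (congrArg d h) jv.2) else 0
  map_add' u v := by
    funext jv; by_cases h : jv.1 = i <;> simp [h]
  map_smul' c u := by
    funext jv; by_cases h : jv.1 = i <;> simp [h]

/-- Coordinates at a vertex. -/
def coord (i : Fin Q.n) : Carrier Q d K →ₗ[K] (Fin (d i) → K) where
  toFun m := fun v => m ⟨i, v⟩
  map_add' _ _ := rfl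
  map_smul' _ _ := rfl

theorem incl_coord (i : Fin Q.n) (m : Carrier Q d K) :
    incl i (coord i m) = proj Q d K i m := by
  funext ⟨j, v⟩
  by_cases h : j = i
  · subst h; simp [incl, coord, proj_apply]
  · simp [incl, proj_apply, h]

theorem coord_incl (i : Fin Q.n) (u : Fin (d i) → K) :
    coord i (incl i u : Carrier Q d K) = u := by
  funext v
  simp [incl, coord]

theorem coord_proj (i : Fin Q.n) (m : Carrier Q d K) :
    coord i (proj Q d K i m) = coord i m := by
  funext v
  simp [coord, proj_apply]

theorem incl_injective (i : Fin Q.n) :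
    Function.Injective (incl i : (Fin (d i) → K) →ₗ[K] Carrier Q d K) :=
  Function.LeftInverse.injective (coord_incl i)

theorem vdim_eq (N : Submodule K (Carrier Q d K)) (i : Fin Q.n) :
    vdim Q d K N i = Module.finrank K (N.map (coord i)) := by
  have : N.map (proj Q d K i) = (N.map (coord i)).map (incl i) := by
    rw [← Submodule.map_comp]
    congr 1
    refine LinearMap.ext fun m => ?_
    exact (incl_coord i m).symm
  rw [vdim, this]
  exact (Submodule.equivMapOfInjective _ (incl_injective i) _).finrank_eq.symm

theorem vdim_top (i : Fin Q.n) : vdim Q d K ⊤ i = d i := by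
  rw [vdim_eq, Submodule.map_top, LinearMap.range_eq_top.mpr]
  · simp
  · intro u; exact ⟨incl i u, coord_incl i u⟩

theorem vdim_le (N : Submodule K (Carrier Q d K)) (i : Fin Q.n) : vdim Q d K N i ≤ d i := by
  refine le_trans ?_ (vdim_top (K := K) i).le; exact vdim_mono le_top i

theorem vdim_lt {N N' : Submodule K (Carrier Q d K)} (i : Fin Q.n) {m : Carrier Q d K}
    (h : N.map (proj Q d K i) ≤ N'.map (proj Q d K i)) (hm : m ∈ N'.map (proj Q d K i))
    (hm' : m ∉ N.map (proj Q d K i)) : vdim Q d K N i < vdim Q d K N' i := by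
  apply Submodule.finrank_lt_finrank_of_lt
  exact lt_of_le_of_ne h (fun h => hm' (h ▸ hm))

/-! ### layerings versus dimensions -/

/-- Dimension vectors of the radical filtration. -/
noncomputable def rd (x : RepSpace Q d K) (l : ℕ) (i : Fin Q.n) : ℕ :=
  vdim Q d K (radPow Q d K x l) i

/-- Dimension vectors of the socle filtration. -/
noncomputable def sd (x : RepSpace Q d K) (l : ℕ) (i : Fin Q.n) : ℕ :=
  vdim Q d K (soc' x l) i

theorem rd_zero (x : RepSpace Q d K) (i : Fin Q.n) : rd x 0 i = d i := by
  rw [rd, radPow_zero, vdim_top]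

theorem rd_anti (x : RepSpace Q d K) {l k : ℕ} (h : l ≤ k) (i : Fin Q.n) : rd x k i ≤ rd x l i :=
  vdim_mono (radPow_antitone x h) i

theorem sd_mono (x : RepSpace Q d K) {l k : ℕ} (h : l ≤ k) (i : Fin Q.n) : sd x l i ≤ sd x k i :=
  vdim_mono (soc'_mono x h) i

theorem sd_zero (x : RepSpace Q d K) (i : Fin Q.n) : sd x 0 i = 0 := vdim_bot i

theorem rd_top {L : ℕ} {x : RepSpace Q d K} (hx : x ∈ TruncRepVar Q d K L) {l : ℕ}
    (hl : L + 1 ≤ l) (i : Fin Q.n) : rd x l i = 0 := by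
  have h1 := rd_anti x hl i
  rw [mem_trunc_iff] at hx
  have h2 : rd x (L+1) i = 0 := by rw [rd, hx, vdim_bot]
  omega

theorem trunc_of_rd {L : ℕ} {x : RepSpace Q d K} (h : ∀ i, rd x (L+1) i = 0) :
    x ∈ TruncRepVar Q d K L := by
  rw [mem_trunc_iff]
  exact eq_bot_of_vdim h

theorem soc'_top {L : ℕ} {x : RepSpace Q d K} (hx : x ∈ TruncRepVar Q d K L) {l : ℕ}
    (hl : L + 1 ≤ l) : soc' x l = ⊤ := by
  rw [mem_trunc_iff] at hx
  have := radPow_le_soc' x (L+1) 0 (by rw [zero_add]; exact hx)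
  rw [radPow_zero] at this
  exact eq_top_iff.mpr (this.trans (soc'_mono x hl))

theorem sd_top {L : ℕ} {x : RepSpace Q d K} (hx : x ∈ TruncRepVar Q d K L) {l : ℕ}
    (hl : L + 1 ≤ l) (i : Fin Q.n) : sd x l i = d i := by
  rw [sd, soc'_top hx hl, vdim_top]

theorem radLayering_apply (L : ℕ) (x : RepSpace Q d K) (l : Fin (L+1)) (i : Fin Q.n) :
    radLayering Q d K L x l i = rd x l i - rd x (l+1) i := rfl

theorem socLayering_apply (L : ℕ) (x : RepSpace Q d K) (l : Fin (L+1)) (i : Fin Q.n) :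
    socLayering Q d K L x l i = sd x (l+1) i - sd x l i := by
  rw [socLayering, socPow_eq]
  rcases l with ⟨l, hl⟩
  cases l with
  | zero => simp [sd, soc', vdim_bot]
  | succ l => simp [socPow_eq, sd]

theorem sum_le_fin {L : ℕ} (g : ℕ → ℕ) (l : Fin (L+1)) :
    ∑ j ∈ Finset.univ.filter (fun j : Fin (L+1) => j ≤ l), g j
      = ∑ j ∈ Finset.range (l+1), g j := by
  apply Finset.sum_bij (fun (j : Fin (L+1)) _ => (j : ℕ))
  · intro j hj
    simp only [Finset.mem_filter, Finset.mem_univ, true_and] at hj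
    simp only [Finset.mem_range]
    have : (j : ℕ) ≤ l := hj
    omega
  · intro a _ b _ h; exact Fin.ext h
  · intro b hb
    simp only [Finset.mem_range] at hb
    refine ⟨⟨b, by omega⟩, ?_, rfl⟩
    simp only [Finset.mem_filter, Finset.mem_univ, true_and]
    exact Fin.mk_le_of_le_val (by omega)
  · intro a _; rfl

theorem sum_rad (L : ℕ) (x : RepSpace Q d K) (l : Fin (L+1)) (i : Fin Q.n) :
    ∑ j ∈ Finset.univ.filter (fun j => j ≤ l), radLayering Q d K L x j i + rd x (l+1) i = d i := by
  have := sum_le_fin (L := L) (fun j => rd x j i - rd x (j+1) i) l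
  simp only [radLayering_apply]
  rw [this]
  generalize (l : ℕ) = k
  induction k with
  | zero => simp [← rd_zero x i, rd_anti x (Nat.zero_le 1) i]
  | succ k ih =>
    rw [Finset.sum_range_succ]
    have := rd_anti x (Nat.le_succ (k+1)) i
    simp only [Nat.succ_eq_add_one] at this
    omega

theorem sum_soc (L : ℕ) (x : RepSpace Q d K) (l : Fin (L+1)) (i : Fin Q.n) :
    ∑ j ∈ Finset.univ.filter (fun j => j ≤ l), socLayering Q d K L x j i = sd x (l+1) i := by
  have := sum_le_fin (L := L) (fun j => sd x (j+1) i - sd x j i) l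
  simp only [socLayering_apply]
  rw [this]
  generalize (l : ℕ) = k
  induction k with
  | zero => simp [sd_zero]
  | succ k ih =>
    rw [Finset.sum_range_succ]
    have := sd_mono x (Nat.le_succ (k+1)) i
    simp only [Nat.succ_eq_add_one] at this
    omega

theorem dominates_rad_iff {L : ℕ} {x y : RepSpace Q d K} (hx : x ∈ TruncRepVar Q d K L) :
    dominates (radLayering Q d K L y) (radLayering Q d K L x) ↔ ∀ l i, rd x l i ≤ rd y l i := by
  constructor
  · intro h l i
    rcases l with _ | l
    · rw [rd_zero, rd_zero]
    · by_cases hl : l < L + 1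
      · have h1 := h ⟨l, hl⟩ i
        have h2 := sum_rad L x ⟨l, hl⟩ i
        have h3 := sum_rad L y ⟨l, hl⟩ i
        simp only at h2 h3
        omega
      · rw [rd_top hx (by omega)]; exact Nat.zero_le _
  · intro h l i
    have h1 := h (l+1) i
    have h2 := sum_rad L x l i
    have h3 := sum_rad L y l i
    omega

theorem dominates_soc_iff {L : ℕ} {x y : RepSpace Q d K}
    (hy : y ∈ TruncRepVar Q d K L) :
    dominates (socLayering Q d K L x) (socLayering Q d K L y) ↔ ∀ l i, sd x l i ≤ sd y l i := by
  constructor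
  · intro h l i
    rcases l with _ | l
    · rw [sd_zero, sd_zero]
    · by_cases hl : l < L + 1
      · have h1 := h ⟨l, hl⟩ i
        have h2 := sum_soc L x ⟨l, hl⟩ i
        have h3 := sum_soc L y ⟨l, hl⟩ i
        simp only at h2 h3
        omega
      · rw [sd_top hy (by omega)]; exact vdim_le _ _
  · intro h l i
    rw [sum_soc, sum_soc]
    exact h _ _

theorem rad_eq_iff {L : ℕ} {x y : RepSpace Q d K} (hx : x ∈ TruncRepVar Q d K L)
    (hy : y ∈ TruncRepVar Q d K L) :
    radLayering Q d K L x = radLayering Q d K L y ↔ ∀ l i, rd x l i = rd y l i := by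
  constructor
  · intro h l i
    apply le_antisymm
    · exact (dominates_rad_iff hx).1 (by rw [h]; intro _ _; exact le_rfl) l i
    · exact (dominates_rad_iff hy).1 (by rw [h]; intro _ _; exact le_rfl) l i
  · intro h
    funext l i
    rw [radLayering_apply, radLayering_apply, h, h]

theorem soc_eq_iff {L : ℕ} {x y : RepSpace Q d K} (hx : x ∈ TruncRepVar Q d K L)
    (hy : y ∈ TruncRepVar Q d K L) :
    socLayering Q d K L x = socLayering Q d K L y ↔ ∀ l i, sd x l i = sd y l i := by
  constructor
  · intro h l i
    apply le_antisymm
    · exact (dominates_soc_iff hy).1 (by rw [h]; intro _ _; exact le_rfl) l i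
    · exact (dominates_soc_iff hx).1 (by rw [h]; intro _ _; exact le_rfl) l i
  · intro h
    funext l i
    rw [socLayering_apply, socLayering_apply, h, h]

theorem hasDimVec_rad {L : ℕ} {x : RepSpace Q d K} (hx : x ∈ TruncRepVar Q d K L) :
    hasDimVec (radLayering Q d K L x) d := by
  intro i
  have := sum_rad L x (Fin.last L) i
  rw [rd_top hx (by simp)] at this
  rw [← this, add_zero]
  congr 1
  ext j
  simp [Fin.le_last]

end Basics
end QuiverData

section PolyTools
open Filter Topology

/-- Polynomial functions on affine space. -/
noncomputable def polyFun (ι K : Type) [Field K] : Subalgebra K ((ι → K) → K) :=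
  (AlgHom.range (AlgHom.pi (R := K) (fun x : ι → K => MvPolynomial.aeval x)))

/-- Polynomial functions in one variable. -/
noncomputable def polyCur (K : Type) [Field K] : Subalgebra K (K → K) :=
  (AlgHom.range (AlgHom.pi (R := K) (fun x : K => Polynomial.aeval x)))

variable {ι K : Type} [Field K]

theorem mem_polyFun {f : (ι → K) → K} :
    f ∈ polyFun ι K ↔ ∃ p : MvPolynomial ι K, ∀ x, MvPolynomial.eval x p = f x := by
  constructor
  · rintro ⟨p, rfl⟩
    exact ⟨p, fun x => rfl⟩
  · rintro ⟨p, hp⟩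
    exact ⟨p, funext hp⟩

theorem mem_polyCur {f : K → K} :
    f ∈ polyCur K ↔ ∃ p : Polynomial K, ∀ x, Polynomial.eval x p = f x := by
  constructor
  · rintro ⟨p, rfl⟩
    exact ⟨p, fun x => by simp [Polynomial.coe_aeval_eq_eval]⟩
  · rintro ⟨p, hp⟩
    exact ⟨p, funext fun x => by simp [Polynomial.coe_aeval_eq_eval, hp]⟩

theorem coord_mem_polyFun (k : ι) : (fun x : ι → K => x k) ∈ polyFun ι K :=
  mem_polyFun.2 ⟨MvPolynomial.X k, fun x => by simp⟩

theorem id_mem_polyCur : (fun t : K => t) ∈ polyCur K :=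
  mem_polyCur.2 ⟨Polynomial.X, fun x => by simp⟩

theorem const_mem_alg {X : Type} (A : Subalgebra K (X → K)) (c : K) : (fun _ => c) ∈ A :=
  A.algebraMap_mem c

theorem sum_mem_alg {X : Type} (A : Subalgebra K (X → K)) {α : Type} (s : Finset α)
    (f : α → X → K) (h : ∀ a ∈ s, f a ∈ A) : (fun x => ∑ a ∈ s, f a x) ∈ A := by
  have := A.sum_mem h
  convert this using 1
  funext x
  simp

theorem prod_mem_alg {X : Type} (A : Subalgebra K (X → K)) {α : Type} (s : Finset α)
    (f : α → X → K) (h : ∀ a ∈ s, f a ∈ A) : (fun x => ∏ a ∈ s, f a x) ∈ A := by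
  have := A.prod_mem h
  convert this using 1
  funext x
  simp

theorem det_mem_alg {X : Type} (A : Subalgebra K (X → K)) {n : Type} [Fintype n] [DecidableEq n]
    (M : X → Matrix n n K) (h : ∀ i j, (fun x => M x i j) ∈ A) : (fun x => (M x).det) ∈ A := by
  simp only [Matrix.det_apply']
  apply sum_mem_alg
  intro σ _
  exact A.mul_mem (const_mem_alg A _) (prod_mem_alg A _ _ fun i _ => h _ _)

theorem adj_mem_alg {X : Type} (A : Subalgebra K (X → K)) {n : Type} [Fintype n] [DecidableEq n]
    (M : X → Matrix n n K) (h : ∀ i j, (fun x => M x i j) ∈ A) (i j : n) :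
    (fun x => (M x).adjugate i j) ∈ A := by
  simp only [Matrix.adjugate_apply]
  apply det_mem_alg
  intro p q
  by_cases hp : p = j
  · subst hp
    simp only [Matrix.updateRow_self]
    exact const_mem_alg A _
  · simp only [Matrix.updateRow_ne hp]
    exact h _ _

theorem mul_mem_alg {X : Type} (A : Subalgebra K (X → K)) {n : Type} [Fintype n]
    (M N : X → Matrix n n K) (hM : ∀ i j, (fun x => M x i j) ∈ A)
    (hN : ∀ i j, (fun x => N x i j) ∈ A) (i j : n) :
    (fun x => (M x * N x) i j) ∈ A := by
  simp only [Matrix.mul_apply]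
  apply sum_mem_alg
  intro k _
  exact A.mul_mem (hM _ _) (hN _ _)

theorem polyCur_cofinite {f : K → K} (hf : f ∈ polyCur K) {t0 : K} (h : f t0 ≠ 0) :
    ∀ᶠ t in cofinite, f t ≠ 0 := by
  obtain ⟨p, hp⟩ := mem_polyCur.1 hf
  have hp0 : p ≠ 0 := by
    rintro rfl
    apply h
    rw [← hp]; simp
  have : {t | p.IsRoot t}.Finite := Polynomial.finite_setOfPred_isRoot hp0
  rw [eventually_cofinite]
  apply this.subset
  intro t ht
  simp only [ne_eq, not_not, Set.mem_ofPred_eq] at ht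
  simp [Polynomial.IsRoot, hp, ht]

theorem comp_mem_polyCur {f : (ι → K) → K} (hf : f ∈ polyFun ι K) {c : K → ι → K}
    (hc : ∀ k, (fun t => c t k) ∈ polyCur K) : (fun t => f (c t)) ∈ polyCur K := by
  obtain ⟨p, hp⟩ := mem_polyFun.1 hf
  choose P hP using fun k => mem_polyCur.1 (hc k)
  refine mem_polyCur.2 ⟨MvPolynomial.aeval P p, fun t => ?_⟩
  rw [← hp]
  have : c t = fun k => Polynomial.evalRingHom t (P k) := by
    funext k; exact (hP k t).symm
  rw [this]
  have h2 := MvPolynomial.map_aeval P (Polynomial.evalRingHom t) p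
  rw [Polynomial.coe_evalRingHom] at h2
  rw [h2]
  have h3 : (Polynomial.evalRingHom t).comp (algebraMap K (Polynomial K)) = RingHom.id K := by
    ext a; simp
  rw [h3]
  rfl

theorem curve_open {c : K → ι → K} (hc : ∀ k, (fun t => c t k) ∈ polyCur K)
    {U : Set (ι → K)} (hU : IsOpen[zariskiTopology ι K] U) {t0 : K} (h : c t0 ∈ U) :
    ∀ᶠ t in cofinite, c t ∈ U := by
  have hU' : TopologicalSpace.GenerateOpen
    {U | ∃ p : MvPolynomial ι K, U = {x | MvPolynomial.eval x p ≠ 0}} U := hU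
  induction hU' with
  | basic s hs =>
    obtain ⟨p, rfl⟩ := hs
    exact polyCur_cofinite (f := fun t => MvPolynomial.eval (c t) p)
      (comp_mem_polyCur (f := fun x => MvPolynomial.eval x p)
        (mem_polyFun.2 ⟨p, fun x => rfl⟩) hc) h
  | univ => simp
  | inter s t hs ht ihs iht => exact (ihs hs h.1).and (iht ht h.2)
  | sUnion S hS ih =>
    obtain ⟨s, hs, hms⟩ := h
    exact (ih s hs (hS s hs) hms).mono fun t ht => ⟨s, hs, ht⟩

theorem isOpen_poly_ne {f : (ι → K) → K} (hf : f ∈ polyFun ι K) :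
    IsOpen[zariskiTopology ι K] {x | f x ≠ 0} := by
  obtain ⟨p, hp⟩ := mem_polyFun.1 hf
  apply TopologicalSpace.isOpen_generateFrom_of_mem
  exact ⟨p, by simp [hp]⟩

end PolyTools

namespace QuiverData
section Semicont
variable {Q : QuiverData} {d : Fin Q.n → ℕ} {K : Type} [Field K]

theorem arrow_poly (a : Fin Q.numArrows) (v : RepSpace Q d K → Carrier Q d K)
    (hv : ∀ jv, (fun x => v x jv) ∈ polyFun (Coords Q d) K) (jv : Σ i : Fin Q.n, Fin (d i)) :
    (fun x => arrowMap Q d K x a (v x) jv) ∈ polyFun (Coords Q d) K := by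
  obtain ⟨j, w⟩ := jv
  by_cases h : j = Q.tgt a
  · subst h
    simp only [arrowMap_apply]
    apply sum_mem_alg
    intro u _
    exact Subalgebra.mul_mem _ (coord_mem_polyFun _) (hv _)
  · have : (fun x => arrowMap Q d K x a (v x) ⟨j, w⟩) = fun _ => 0 := by
      funext x; exact arrowMap_apply_ne _ _ _ _ h
    rw [this]
    exact const_mem_alg _ _

theorem rad_lift (x0 : RepSpace Q d K) (l : ℕ) : ∀ m ∈ radPow Q d K x0 l,
    ∃ v : RepSpace Q d K → Carrier Q d K,
      (∀ jv, (fun x => v x jv) ∈ polyFun (Coords Q d) K) ∧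
      (∀ x, v x ∈ radPow Q d K x l) ∧ v x0 = m := by
  induction l with
  | zero =>
    intro m _
    exact ⟨fun _ => m, fun jv => const_mem_alg _ _, fun x => by rw [radPow_zero]; trivial, rfl⟩
  | succ l ih =>
    intro m hm
    rw [radPow_succ] at hm
    induction hm using Submodule.iSup_induction' with
    | mem a m hm =>
      obtain ⟨u, hu, rfl⟩ := hm
      obtain ⟨v, hv, hvm, rfl⟩ := ih u hu
      exact ⟨fun x => arrowMap Q d K x a (v x), arrow_poly a v hv,
        fun x => arrowMap_mem_radPow x l a (hvm x), rfl⟩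
    | zero =>
      exact ⟨fun _ => 0, fun jv => const_mem_alg _ _, fun x => Submodule.zero_mem _, rfl⟩
    | add u w _ _ hu hw =>
      obtain ⟨v, hv, hvm, rfl⟩ := hu
      obtain ⟨v', hv', hvm', rfl⟩ := hw
      exact ⟨fun x => v x + v' x, fun jv => Subalgebra.add_mem _ (hv jv) (hv' jv),
        fun x => Submodule.add_mem _ (hvm x) (hvm' x), rfl⟩

theorem isOpen_rd (l : ℕ) (i : Fin Q.n) (k : ℕ) :
    IsOpen {x : RepSpace Q d K | k ≤ rd x l i} := by
  rw [isOpen_iff_forall_mem_open]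
  intro x0 hx0
  simp only [Set.mem_ofPred_eq, rd, vdim_eq] at hx0
  let W := (radPow Q d K x0 l).map (coord i)
  let b0 := Module.finBasis K W
  let b : Fin k → W := fun q => b0 (Fin.castLE hx0 q)
  have hb : LinearIndependent K (fun q => (b q : Fin (d i) → K)) := by
    have h1 : LinearIndependent K b :=
      b0.linearIndependent.comp _ (Fin.castLE_injective hx0)
    exact h1.map' W.subtype (Submodule.ker_subtype W)
  have hex : ∀ q, ∃ v : RepSpace Q d K → Carrier Q d K,
      (∀ jv, (fun x => v x jv) ∈ polyFun (Coords Q d) K) ∧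
      (∀ x, v x ∈ radPow Q d K x l) ∧ coord i (v x0) = b q := by
    intro q
    obtain ⟨m, hm, hmb⟩ := (b q).2
    obtain ⟨v, h1, h2, h3⟩ := rad_lift x0 l m hm
    exact ⟨v, h1, h2, by rw [h3, hmb]⟩
  choose v hv1 hv2 hv3 using hex
  obtain ⟨φ, hφ⟩ := LinearMap.exists_leftInverse_of_injective
    (Fintype.linearCombination K (fun q => (b q : Fin (d i) → K)))
    (by rw [LinearMap.ker_eq_bot]; exact linearIndependent_iff_injective_fintypeLinearCombination.1 hb)
  let M : RepSpace Q d K → Matrix (Fin k) (Fin k) K :=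
    fun x => Matrix.of fun q p => φ (coord i (v q x)) p
  have hM : ∀ p q, (fun x => M x p q) ∈ polyFun (Coords Q d) K := by
    intro q p
    have : ∀ x, M x q p = ∑ w, v q x ⟨i, w⟩ * φ (Pi.single w 1) p := by
      intro x
      have h1 : coord i (v q x) = ∑ w, v q x ⟨i, w⟩ • (Pi.single w 1 : Fin (d i) → K) := by
        funext w
        simp [coord, Finset.sum_apply, Pi.single_apply]
      simp only [M, Matrix.of_apply]
      rw [h1, map_sum, Finset.sum_apply]
      simp
    simp only [this]
    apply sum_mem_alg
    intro w _
    exact Subalgebra.mul_mem _ (hv1 _ _) (const_mem_alg _ _)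
  refine ⟨{x | (M x).det ≠ 0}, ?_, isOpen_poly_ne (det_mem_alg _ M hM), ?_⟩
  · intro x hx
    simp only [Set.mem_ofPred_eq, rd, vdim_eq] at hx ⊢
    have h1 : LinearIndependent K (fun q => M x q) := by
      apply Matrix.linearIndependent_rows_of_isUnit
      rw [Matrix.isUnit_iff_isUnit_det]
      exact isUnit_iff_ne_zero.2 hx
    have h2 : LinearIndependent K (fun q => coord i (v q x)) :=
      LinearIndependent.of_comp φ h1
    let c : Fin k → (radPow Q d K x l).map (coord i) :=
      fun q => ⟨coord i (v q x), Submodule.mem_map_of_mem (hv2 q x)⟩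
    have h3 : LinearIndependent K c :=
      LinearIndependent.of_comp (Submodule.subtype _) h2
    simpa using h3.fintype_card_le_finrank
  · have : M x0 = 1 := by
      ext q p
      simp only [M, Matrix.of_apply, hv3]
      have := congrArg (fun f => f (Pi.single q 1) p) hφ
      simp only [LinearMap.comp_apply, LinearMap.id_apply] at this
      rw [Fintype.linearCombination_apply_single, one_smul] at this
      rw [this, Matrix.one_apply, Pi.single_apply]
      simp only [eq_comm]
    simp [this]

end Semicont
end QuiverData

section LinAlg
variable {K : Type} [Field K]

theorem exists_extend_equiv {V W : Type} [AddCommGroup V] [Module K V] [FiniteDimensional K V]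
    [AddCommGroup W] [Module K W] [FiniteDimensional K W] (hVW : Module.finrank K V = Module.finrank K W)
    (A : Submodule K V) (B : Submodule K W) (e : A ≃ₗ[K] B) :
    ∃ h : V ≃ₗ[K] W, ∀ a : A, h a = e a := by
  obtain ⟨A', hA⟩ := A.exists_isCompl
  obtain ⟨B', hB⟩ := B.exists_isCompl
  have h1 := Submodule.finrank_add_eq_of_isCompl hA
  have h2 := Submodule.finrank_add_eq_of_isCompl hB
  have h3 := e.finrank_eq
  have e' : A' ≃ₗ[K] B' := LinearEquiv.ofFinrankEq _ _ (by omega)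
  refine ⟨(Submodule.prodEquivOfIsCompl A A' hA).symm ≪≫ₗ (LinearEquiv.prodCongr e e') ≪≫ₗ
    (Submodule.prodEquivOfIsCompl B B' hB), fun a => ?_⟩
  simp

theorem chain_equiv (N : ℕ) : ∀ (V W : Type) [AddCommGroup V] [Module K V]
    [FiniteDimensional K V] [AddCommGroup W] [Module K W] [FiniteDimensional K W]
    (F : ℕ → Submodule K V) (G : ℕ → Submodule K W), Antitone F → Antitone G →
    Module.finrank K V = Module.finrank K W →
    (∀ l, Module.finrank K (F l) = Module.finrank K (G l)) →
    ∃ h : V ≃ₗ[K] W, ∀ l < N, (F l).map (h : V →ₗ[K] W) = G l := by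
  induction N with
  | zero =>
    intro V W _ _ _ _ _ _ F G _ _ hVW _
    exact ⟨LinearEquiv.ofFinrankEq _ _ hVW, by simp⟩
  | succ N ih =>
    intro V W _ _ _ _ _ _ F G hF hG hVW hFG
    obtain ⟨e, he⟩ := ih (F 0) (G 0) (fun l => (F (l+1)).comap (F 0).subtype)
      (fun l => (G (l+1)).comap (G 0).subtype)
      (fun l k h => Submodule.comap_mono (hF (Nat.succ_le_succ h)))
      (fun l k h => Submodule.comap_mono (hG (Nat.succ_le_succ h))) (hFG 0)
      (fun l => by
        rw [(Submodule.comapSubtypeEquivOfLe (hF (Nat.zero_le (l+1)))).finrank_eq,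
          (Submodule.comapSubtypeEquivOfLe (hG (Nat.zero_le (l+1)))).finrank_eq, hFG])
    obtain ⟨h, hh⟩ := exists_extend_equiv hVW (F 0) (G 0) e
    refine ⟨h, fun l hl => ?_⟩
    apply Submodule.eq_of_le_of_finrank_le
    · rintro _ ⟨v, hv, rfl⟩
      have hv0 : v ∈ F 0 := hF (Nat.zero_le l) hv
      have h1 : h v = e ⟨v, hv0⟩ := hh ⟨v, hv0⟩
      simp only [LinearEquiv.coe_coe]
      rw [h1]
      cases l with
      | zero => exact (e ⟨v, hv0⟩).2
      | succ l =>
        have h2 := he l (by omega)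
        have h3 : e ⟨v, hv0⟩ ∈ (G (l+1)).comap (G 0).subtype := by
          rw [← h2]
          exact Submodule.mem_map_of_mem hv
        exact h3
    · rw [← hFG l]
      exact (LinearEquiv.finrank_map_eq h (F l)).ge

end LinAlg

namespace QuiverData
section Irred
open Filter
variable {Q : QuiverData} {d : Fin Q.n → ℕ} {K : Type} [Field K]

/-- Assemble vertexwise equivalences. -/
noncomputable def assemble (h : ∀ i : Fin Q.n, (Fin (d i) → K) ≃ₗ[K] (Fin (d i) → K)) :
    Carrier Q d K ≃ₗ[K] Carrier Q d K where
  toFun m := fun jv => h jv.1 (coord jv.1 m) jv.2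
  invFun m := fun jv => (h jv.1).symm (coord jv.1 m) jv.2
  map_add' u v := by funext jv; simp
  map_smul' c u := by funext jv; simp
  left_inv m := by
    funext ⟨i, v⟩
    have : coord i (fun jv : Σ i : Fin Q.n, Fin (d i) => h jv.1 (coord jv.1 m) jv.2)
      = h i (coord i m) := rfl
    simp only [this, LinearEquiv.symm_apply_apply]
    rfl
  right_inv m := by
    funext ⟨i, v⟩
    have : coord i (fun jv : Σ i : Fin Q.n, Fin (d i) => (h jv.1).symm (coord jv.1 m) jv.2)
      = (h i).symm (coord i m) := rfl
    simp only [this, LinearEquiv.apply_symm_apply]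
    rfl

theorem coord_assemble (h : ∀ i : Fin Q.n, (Fin (d i) → K) ≃ₗ[K] (Fin (d i) → K)) (i : Fin Q.n)
    (m : Carrier Q d K) : coord i (assemble h m) = h i (coord i m) := rfl

theorem coord_ne (i j : Fin Q.n) (hij : i ≠ j) (m : Carrier Q d K) :
    coord i (proj Q d K j m) = 0 := by
  funext v; simp [coord, proj_apply, hij]

theorem carrier_ext {m m' : Carrier Q d K} (h : ∀ i, coord i m = coord i m') : m = m' := by
  funext ⟨i, v⟩
  exact congrFun (h i) v

theorem assemble_proj (h : ∀ i : Fin Q.n, (Fin (d i) → K) ≃ₗ[K] (Fin (d i) → K)) (i : Fin Q.n)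
    (m : Carrier Q d K) : assemble h (proj Q d K i m) = proj Q d K i (assemble h m) := by
  apply carrier_ext
  intro j
  rw [coord_assemble]
  by_cases hij : j = i
  · subst hij
    rw [coord_proj, coord_proj, coord_assemble]
  · rw [coord_ne _ _ hij, coord_ne _ _ hij, map_zero]

theorem vdim_map_graded (h : Carrier Q d K ≃ₗ[K] Carrier Q d K)
    (hp : ∀ i m, h (proj Q d K i m) = proj Q d K i (h m)) (N : Submodule K (Carrier Q d K))
    (i : Fin Q.n) :
    vdim Q d K (N.map (h : Carrier Q d K →ₗ[K] Carrier Q d K)) i = vdim Q d K N i := by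
  have : (N.map (h : Carrier Q d K →ₗ[K] Carrier Q d K)).map (proj Q d K i)
      = (N.map (proj Q d K i)).map (h : Carrier Q d K →ₗ[K] Carrier Q d K) := by
    rw [← Submodule.map_comp, ← Submodule.map_comp]
    congr 1
    exact LinearMap.ext fun m => (hp i m).symm
  rw [vdim, this]
  exact LinearEquiv.finrank_map_eq h _

theorem exists_graded_equiv (F G : ℕ → Submodule K (Carrier Q d K)) (hF : Antitone F)
    (hG : Antitone G) (hFg : ∀ l, Graded (F l)) (hGg : ∀ l, Graded (G l))
    (hd : ∀ l i, vdim Q d K (F l) i = vdim Q d K (G l) i) (N : ℕ) :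
    ∃ h : Carrier Q d K ≃ₗ[K] Carrier Q d K,
      (∀ i m, h (proj Q d K i m) = proj Q d K i (h m)) ∧
      ∀ l < N, (F l).map (h : Carrier Q d K →ₗ[K] Carrier Q d K) = G l := by
  have := fun i => chain_equiv (K := K) N (Fin (d i) → K) (Fin (d i) → K)
    (fun l => (F l).map (coord i)) (fun l => (G l).map (coord i))
    (fun l k h => Submodule.map_mono (hF h)) (fun l k h => Submodule.map_mono (hG h)) rfl
    (fun l => by rw [← vdim_eq, ← vdim_eq, hd])
  choose h hh using this
  refine ⟨assemble h, assemble_proj h, fun l hl => ?_⟩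
  have hle : (F l).map (assemble h : Carrier Q d K →ₗ[K] Carrier Q d K) ≤ G l := by
    rintro _ ⟨m, hm, rfl⟩
    apply mem_of_proj_mem
    intro i
    have h1 : h i (coord i m) ∈ (G l).map (coord i) := by
      rw [← hh i l hl]
      exact Submodule.mem_map_of_mem (Submodule.mem_map_of_mem hm)
    obtain ⟨m', hm', h2⟩ := h1
    have : proj Q d K i (assemble h m) = proj Q d K i m' := by
      rw [← incl_coord, ← incl_coord, h2, coord_assemble]
    simp only [LinearEquiv.coe_coe]
    rw [this]
    exact hGg l i m' hm'
  refine eq_of_vdim_eq ?_ hle fun i => ?_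
  · rintro i _ ⟨m, hm, rfl⟩
    exact ⟨proj Q d K i m, hFg l i m hm, assemble_proj h i m⟩
  · rw [vdim_map_graded _ (assemble_proj h), hd]

end Irred
end QuiverData

namespace QuiverData
section Curve
open Filter
variable {Q : QuiverData} {d : Fin Q.n → ℕ} {K : Type} [Field K]

theorem radPow_iso {y w : RepSpace Q d K} (φ : Carrier Q d K ≃ₗ[K] Carrier Q d K)
    {c : K} (hc : c ≠ 0)
    (h : ∀ a m, arrowMap Q d K y a (φ m) = c • φ (arrowMap Q d K w a m)) (l : ℕ) :
    radPow Q d K y l = (radPow Q d K w l).map (φ : Carrier Q d K →ₗ[K] Carrier Q d K) := by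
  induction l with
  | zero =>
    rw [radPow_zero, radPow_zero, Submodule.map_top]
    exact (LinearMap.range_eq_top.2 φ.surjective).symm
  | succ l ih =>
    rw [radPow_succ, radPow_succ, ih, Submodule.map_iSup]
    congr 1
    funext a
    rw [← Submodule.map_comp, ← Submodule.map_comp]
    have : arrowMap Q d K y a ∘ₗ (φ : Carrier Q d K →ₗ[K] Carrier Q d K)
      = c • ((φ : Carrier Q d K →ₗ[K] Carrier Q d K) ∘ₗ arrowMap Q d K w a) :=
      LinearMap.ext fun m => h a m
    rw [this, Submodule.map_smul _ _ _ hc]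

theorem rd_iso {y w : RepSpace Q d K} (φ : Carrier Q d K ≃ₗ[K] Carrier Q d K)
    (hp : ∀ i m, φ (proj Q d K i m) = proj Q d K i (φ m))
    {c : K} (hc : c ≠ 0)
    (h : ∀ a m, arrowMap Q d K y a (φ m) = c • φ (arrowMap Q d K w a m)) (l : ℕ) (i : Fin Q.n) :
    rd y l i = rd w l i := by
  rw [rd, radPow_iso φ hc h, vdim_map_graded φ hp]
  rfl

theorem curve_exists {L : ℕ} {z1 z2 : RepSpace Q d K} (h1 : z1 ∈ TruncRepVar Q d K L)
    (h2 : z2 ∈ TruncRepVar Q d K L) (h12 : ∀ l i, rd z1 l i = rd z2 l i) :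
    ∃ c : K → RepSpace Q d K, (∀ k, (fun t => c t k) ∈ polyCur K) ∧ c 0 = z1 ∧ c 1 = z2 ∧
      ∀ᶠ t in cofinite, c t ∈ TruncRepVar Q d K L ∧ ∀ l i, rd (c t) l i = rd z1 l i := by
  classical
  obtain ⟨h, hp, hh⟩ := exists_graded_equiv (radPow Q d K z1) (radPow Q d K z2)
    (radPow_antitone z1) (radPow_antitone z2) (radPow_graded z1) (radPow_graded z2) h12 (L+2)
  have hps : ∀ i m, h.symm (proj Q d K i m) = proj Q d K i (h.symm m) := by
    intro i m
    apply h.injective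
    rw [hp, h.apply_symm_apply, h.apply_symm_apply]
  set w2 : RepSpace Q d K := ofEnd (fun a =>
    (h.symm : Carrier Q d K →ₗ[K] Carrier Q d K) ∘ₗ arrowMap Q d K z2 a ∘ₗ
      (h : Carrier Q d K →ₗ[K] Carrier Q d K)) with hw2
  have hw2a : ∀ a m, arrowMap Q d K w2 a m = h.symm (arrowMap Q d K z2 a (h m)) := by
    intro a m
    rw [hw2, arrowMap_ofEnd]
    simp only [LinearMap.comp_apply, LinearEquiv.coe_coe]
    rw [hp, arrowMap_apply_self, ← hps, proj_arrowMap]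
  have hmem : ∀ l, l < L + 2 → ∀ m, m ∈ radPow Q d K z1 l ↔ h m ∈ radPow Q d K z2 l := by
    intro l hl m
    rw [← hh l hl]
    constructor
    · intro hm
      exact Submodule.mem_map_of_mem hm
    · rintro ⟨m', hm', he⟩
      rwa [← h.injective he]
  have hz1 : ∀ l, L + 1 ≤ l → radPow Q d K z1 l = ⊥ := fun l hl =>
    eq_bot_iff.2 ((radPow_antitone z1 hl).trans ((mem_trunc_iff L z1).1 h1).le)
  have hz2 : ∀ l, L + 1 ≤ l → radPow Q d K z2 l = ⊥ := fun l hl =>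
    eq_bot_iff.2 ((radPow_antitone z2 hl).trans ((mem_trunc_iff L z2).1 h2).le)
  have hw2r : ∀ l a m, m ∈ radPow Q d K z1 l → arrowMap Q d K w2 a m ∈ radPow Q d K z1 (l+1) := by
    intro l a m hm
    rw [hw2a]
    by_cases hl : l < L + 1
    · rw [hmem (l+1) (by omega), h.apply_symm_apply]
      exact arrowMap_mem_radPow z2 l a ((hmem l (by omega) m).1 hm)
    · rw [hz1 l (by omega)] at hm
      rw [(Submodule.mem_bot K).1 hm]
      simp
  set wt : K → RepSpace Q d K := fun t => (1 - t) • z1 + t • w2 with hwt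
  have hwtr : ∀ t l, radPow Q d K (wt t) l ≤ radPow Q d K z1 l := by
    intro t l
    apply radPow_le_of _ _ (radPow_zero z1)
    intro l a m hm
    rw [hwt]
    simp only
    rw [arrowMap_lin]
    exact Submodule.add_mem _ (Submodule.smul_mem _ _ (arrowMap_mem_radPow z1 l a hm))
      (Submodule.smul_mem _ _ (hw2r l a m hm))
  have hpoly1 : (fun t : K => 1 - t) ∈ polyCur K :=
    (polyCur K).sub_mem (const_mem_alg _ 1) id_mem_polyCur
  have hwtp : ∀ k, (fun t => wt t k) ∈ polyCur K := by
    intro k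
    exact (polyCur K).add_mem ((polyCur K).mul_mem hpoly1 (const_mem_alg _ (z1 k)))
      ((polyCur K).mul_mem id_mem_polyCur (const_mem_alg _ (w2 k)))
  have hwt0 : wt 0 = z1 := by simp [hwt]
  have hev1 : ∀ᶠ t in cofinite, ∀ l i, rd (wt t) l i = rd z1 l i := by
    have : ∀ᶠ t in cofinite, ∀ l ∈ Finset.range (L+1), ∀ i, rd z1 l i ≤ rd (wt t) l i := by
      rw [Filter.eventually_all_finset]
      intro l _
      rw [Filter.eventually_all]
      intro i
      exact curve_open hwtp (isOpen_rd l i (rd z1 l i)) (t0 := 0) (by rw [hwt0]; exact le_refl (rd z1 l i))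
    filter_upwards [this] with t ht l i
    by_cases hl : l < L + 1
    · exact le_antisymm (vdim_mono (hwtr t l) i) (ht l (Finset.mem_range.2 hl) i)
    · have h3 : rd (wt t) l i ≤ rd z1 l i := vdim_mono (hwtr t l) i
      rw [rd_top h1 (by omega)] at h3 ⊢
      omega
  set H : Matrix _ _ K := LinearMap.toMatrix' (h : Carrier Q d K →ₗ[K] Carrier Q d K) with hH
  have hdet : H.det ≠ 0 := by
    rw [hH, LinearMap.det_toMatrix']
    exact (LinearEquiv.isUnit_det' h).ne_zero
  set M : K → Matrix (Σ i : Fin Q.n, Fin (d i)) (Σ i : Fin Q.n, Fin (d i)) K :=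
    fun t => (1 - t) • (1 : Matrix _ _ K) + t • H with hM
  set sc : K → K := fun t => (1 - t) + t * (H.det)⁻¹ with hsc
  set N : Fin Q.numArrows → K → Matrix (Σ i : Fin Q.n, Fin (d i)) (Σ i : Fin Q.n, Fin (d i)) K :=
    fun a t => (1 - t) • LinearMap.toMatrix' (arrowMap Q d K z1 a)
      + t • LinearMap.toMatrix' (arrowMap Q d K w2 a) with hN
  have hNw : ∀ a t m, (N a t).mulVec m = arrowMap Q d K (wt t) a m := by
    intro a t m
    rw [hN, hwt]
    simp only
    rw [arrowMap_lin, Matrix.add_mulVec, Matrix.smul_mulVec, Matrix.smul_mulVec,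
      LinearMap.toMatrix'_mulVec, LinearMap.toMatrix'_mulVec]
  have hMm : ∀ t m, (M t).mulVec m = (1 - t) • m + t • h m := by
    intro t m
    rw [hM]
    simp only
    rw [Matrix.add_mulVec, Matrix.smul_mulVec, Matrix.smul_mulVec, Matrix.one_mulVec, hH,
      LinearMap.toMatrix'_mulVec]
    rfl
  set c : K → RepSpace Q d K := fun t => ofEnd (fun a =>
    Matrix.toLin' (sc t • (M t * N a t * (M t).adjugate))) with hc
  have hca : ∀ t a m, arrowMap Q d K (c t) a ((M t).mulVec m)
      = (sc t * (M t).det) • (M t).mulVec (arrowMap Q d K (wt t) a m) := by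
    intro t a m
    have hMp : ∀ i m, proj Q d K i ((M t).mulVec m) = (M t).mulVec (proj Q d K i m) := by
      intro i m
      rw [hMm, hMm, map_add, map_smul, map_smul, hp]
    rw [hc]
    simp only
    rw [arrowMap_ofEnd, hMp, Matrix.toLin'_apply, Matrix.smul_mulVec, Matrix.mulVec_mulVec,
      Matrix.mul_assoc, Matrix.adjugate_mul, Matrix.mul_smul, Matrix.mul_one, Matrix.smul_mulVec,
      ← Matrix.mulVec_mulVec, hNw, arrowMap_apply_self, map_smul, map_smul, hMp, proj_arrowMap,
      mul_smul]
  have hM0 : M 0 = 1 := by simp [hM]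
  have hM1 : M 1 = H := by simp [hM]
  have hMp : ∀ i j, (fun t => M t i j) ∈ polyCur K := by
    intro i j
    exact (polyCur K).add_mem ((polyCur K).mul_mem hpoly1 (const_mem_alg _ _))
      ((polyCur K).mul_mem id_mem_polyCur (const_mem_alg _ _))
  have hNp : ∀ a i j, (fun t => N a t i j) ∈ polyCur K := by
    intro a i j
    exact (polyCur K).add_mem ((polyCur K).mul_mem hpoly1 (const_mem_alg _ _))
      ((polyCur K).mul_mem id_mem_polyCur (const_mem_alg _ _))
  have hscp : sc ∈ polyCur K :=
    (polyCur K).add_mem hpoly1 ((polyCur K).mul_mem id_mem_polyCur (const_mem_alg _ _))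
  refine ⟨c, ?_, ?_, ?_, ?_⟩
  · intro k
    have : (fun t => c t k) = fun t => sc t *
        (M t * N k.1 t * (M t).adjugate) ⟨Q.tgt k.1, k.2.1⟩ ⟨Q.src k.1, k.2.2⟩ := by
      funext t
      rw [hc]
      simp only [ofEnd]
      rw [Matrix.toLin'_apply, Matrix.mulVec_single_one]
      rfl
    rw [this]
    exact (polyCur K).mul_mem hscp (mul_mem_alg _ _ _ (mul_mem_alg _ _ _ hMp (hNp k.1))
      (adj_mem_alg _ _ hMp) _ _)
  · rw [← ofEnd_arrowMap (c 0), ← ofEnd_arrowMap z1]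
    congr 1
    funext a
    refine LinearMap.ext fun m => ?_
    have := hca 0 a m
    rw [hM0, hwt0] at this
    simpa [hsc] using this
  · rw [← ofEnd_arrowMap (c 1), ← ofEnd_arrowMap z2]
    congr 1
    funext a
    refine LinearMap.ext fun m => ?_
    have := hca 1 a (h.symm m)
    rw [hMm, hMm, hM1] at this
    simpa [hsc, hdet, hwt, hw2a] using this
  · have e1 := polyCur_cofinite (det_mem_alg _ _ hMp) (t0 := 0) (by rw [hM0]; simp)
    have e2 := polyCur_cofinite hscp (t0 := 0) (by simp [hsc])
    filter_upwards [hev1, e1, e2] with t ht h3 h4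
    have hu : IsUnit (M t).det := isUnit_iff_ne_zero.2 h3
    set φ := LinearEquiv.ofIsUnitDet (f := Matrix.toLin' (M t)) (v := Pi.basisFun K _)
      (v' := Pi.basisFun K _) (by
        rw [LinearMap.toMatrix_eq_toMatrix', LinearMap.toMatrix'_toLin']; exact hu) with hφ
    have hφm : ∀ m, φ m = (M t).mulVec m := fun m => rfl
    have key : ∀ l i, rd (c t) l i = rd z1 l i := by
      intro l i
      rw [← ht l i]
      refine rd_iso φ ?_ (mul_ne_zero h4 h3) ?_ l i
      · intro i m
        rw [hφm, hφm, hMm, hMm, map_add, map_smul, map_smul, hp]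
      · intro a m
        rw [hφm, hφm, hca]
    exact ⟨trunc_of_rd fun i => by rw [key, rd_top h1 le_rfl], key⟩

end Curve
end QuiverData

namespace QuiverData
section Dual
set_option linter.unusedSectionVars false
open Filter

/-- The opposite quiver. -/
abbrev op (Q : QuiverData) : QuiverData := ⟨Q.n, Q.numArrows, Q.tgt, Q.src⟩

variable {Q : QuiverData} {d : Fin Q.n → ℕ} {K : Type} [Field K]

/-- Index swap. -/
def swapC (c : Coords (op Q) d) : Coords Q d := ⟨c.1, (c.2.2, c.2.1)⟩

/-- The transposed representation. -/
def tau (x : RepSpace Q d K) : RepSpace (op Q) d K := fun c => x (swapC c)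

/-- The transposed representation, backwards. -/
def tauInv (x : RepSpace (op Q) d K) : RepSpace Q d K := tau (Q := op Q) x

theorem tau_tauInv (x : RepSpace (op Q) d K) : tau (tauInv x) = x := rfl

theorem tauInv_tau (x : RepSpace Q d K) : tauInv (tau x) = x := rfl

theorem dot_arrow (x : RepSpace Q d K) (a : Fin Q.numArrows) (u m : Carrier Q d K) :
    u ⬝ᵥ arrowMap Q d K x a m = ∑ v : Fin (d (Q.tgt a)), ∑ w : Fin (d (Q.src a)),
      u ⟨Q.tgt a, v⟩ * (x ⟨a, (v, w)⟩ * m ⟨Q.src a, w⟩) := by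
  rw [dotProduct, Fintype.sum_sigma, Fintype.sum_eq_single (Q.tgt a)]
  · simp only [arrowMap_apply, Finset.mul_sum]
  · intro j hj
    apply Finset.sum_eq_zero
    intro v _
    rw [arrowMap_apply_ne _ _ _ _ hj, mul_zero]

theorem dot_tau (x : RepSpace Q d K) (a : Fin Q.numArrows) (u m : Carrier Q d K) :
    (show Carrier Q d K from arrowMap (op Q) d K (tau x) a u) ⬝ᵥ m
      = u ⬝ᵥ arrowMap Q d K x a m := by
  rw [dotProduct_comm, dot_arrow x a u m]
  have := dot_arrow (Q := op Q) (tau x) a m u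
  refine this.trans ?_
  rw [Finset.sum_comm]
  refine Finset.sum_congr rfl fun v _ => Finset.sum_congr rfl fun w _ => ?_
  change m ⟨Q.src a, w⟩ * (x ⟨a, (v, w)⟩ * u ⟨Q.tgt a, v⟩) = _
  ring

theorem mem_soc'_iff (x : RepSpace Q d K) (k : ℕ) : ∀ m : Carrier Q d K,
    m ∈ soc' x k ↔ ∀ u : Carrier Q d K, u ∈ radPow (op Q) d K (tau x) k → u ⬝ᵥ m = 0 := by
  induction k with
  | zero =>
    intro m
    constructor
    · intro hm u _
      have : m = 0 := (Submodule.mem_bot K).1 hm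
      rw [this, dotProduct_zero]
    · intro h
      have : m = 0 := by
        apply dotProduct_eq_zero
        intro u
        rw [dotProduct_comm]
        exact h u (by rw [radPow_zero]; trivial)
      rw [this]
      exact Submodule.zero_mem _
  | succ k ih =>
    intro m
    rw [mem_soc'_succ]
    constructor
    · intro h u hu
      rw [radPow_succ] at hu
      induction hu using Submodule.iSup_induction' with
      | mem a u hu =>
        obtain ⟨u', hu', rfl⟩ := hu
        exact (dot_tau x a u' m).trans ((ih _).1 (h a) u' hu')
      | zero => exact zero_dotProduct _
      | add u v _ _ hu hv => exact (add_dotProduct _ _ _).trans (by rw [hu, hv, add_zero])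
    · intro h a
      rw [ih]
      intro u hu
      rw [← dot_tau]
      exact h _ (arrowMap_mem_radPow (Q := op Q) _ k a hu)

theorem finrank_perp {n : ℕ} (R S : Submodule K (Fin n → K))
    (h : ∀ v, v ∈ S ↔ ∀ u ∈ R, u ⬝ᵥ v = 0) :
    Module.finrank K S + Module.finrank K R = n := by
  have h1 := Subspace.finrank_add_finrank_dualCoannihilator_eq
    (R.map (dotProductEquiv K (Fin n)).toLinearMap)
  have h2 : (R.map (dotProductEquiv K (Fin n)).toLinearMap).dualCoannihilator = S := by
    ext v
    rw [Submodule.mem_dualCoannihilator, h]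
    constructor
    · intro h3 u hu
      exact h3 _ (Submodule.mem_map_of_mem hu)
    · rintro h3 _ ⟨u, hu, rfl⟩
      exact h3 u hu
  rw [h2, LinearEquiv.finrank_map_eq, Module.finrank_fin_fun] at h1
  omega

theorem dot_incl (i : Fin Q.n) (u : Carrier Q d K) (v : Fin (d i) → K) :
    u ⬝ᵥ (incl i v : Carrier Q d K) = coord i u ⬝ᵥ v := by
  have h : ∀ w : Fin (d i), (incl i v : Carrier Q d K) ⟨i, w⟩ = v w := fun w =>
    congrFun (coord_incl i v) w
  have h' : ∀ j (w : Fin (d j)), j ≠ i → (incl i v : Carrier Q d K) ⟨j, w⟩ = 0 := by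
    intro j w hj
    have := coord_ne j i hj (incl i v : Carrier Q d K)
    rw [← incl_coord, coord_incl] at this
    exact congrFun this w
  rw [dotProduct, Fintype.sum_sigma, Fintype.sum_eq_single i]
  · simp only [h]
    rfl
  · intro j hj
    apply Finset.sum_eq_zero
    intro w _
    rw [h' j w hj, mul_zero]

theorem sd_add_rd (x : RepSpace Q d K) (k : ℕ) (i : Fin Q.n) :
    sd x k i + rd (Q := op Q) (tau x) k i = d i := by
  rw [sd, rd, vdim_eq, vdim_eq]
  apply finrank_perp
  intro v
  constructor
  · rintro ⟨m, hm, rfl⟩ _ ⟨u, hu, rfl⟩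
    have h1 := (mem_soc'_iff x k _).1 (soc'_graded x k i m hm) u hu
    rw [← incl_coord] at h1
    exact (dot_incl (Q := Q) i u _).symm.trans h1
  · intro h
    refine ⟨incl i v, ?_, coord_incl i v⟩
    rw [SetLike.mem_coe, mem_soc'_iff]
    intro u hu
    rw [dot_incl]
    exact h _ ⟨u, hu, rfl⟩

theorem tau_trunc {L : ℕ} {x : RepSpace Q d K} (hx : x ∈ TruncRepVar Q d K L) :
    tau x ∈ TruncRepVar (op Q) d K L := by
  apply trunc_of_rd
  intro i
  have h1 := sd_add_rd x (L+1) i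
  rw [sd_top hx le_rfl] at h1
  omega

theorem tauInv_trunc {L : ℕ} {x : RepSpace (op Q) d K} (hx : x ∈ TruncRepVar (op Q) d K L) :
    tauInv x ∈ TruncRepVar Q d K L := tau_trunc (Q := op Q) hx

theorem sd_tau_add (x : RepSpace Q d K) (k : ℕ) (i : Fin Q.n) :
    sd (Q := op Q) (tau x) k i + rd x k i = d i :=
  sd_add_rd (Q := op Q) (tau x) k i

theorem tau_continuous : Continuous (tau : RepSpace Q d K → RepSpace (op Q) d K) := by
  apply continuous_generateFrom_iff.2
  rintro _ ⟨p, rfl⟩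
  apply TopologicalSpace.isOpen_generateFrom_of_mem
  refine ⟨MvPolynomial.rename swapC p, ?_⟩
  ext x
  simp only [Set.mem_preimage, Set.mem_ofPred_eq, MvPolynomial.eval_rename]
  rfl

theorem isOpen_sd (l : ℕ) (i : Fin Q.n) (k : ℕ) :
    IsOpen {x : RepSpace Q d K | sd x l i ≤ k} := by
  have := (isOpen_rd (Q := op Q) (d := d) (K := K) l i (d i - k)).preimage
    (tau_continuous (Q := Q))
  convert this using 1
  ext x
  have h1 := sd_add_rd x l i
  simp only [Set.mem_preimage, Set.mem_ofPred_eq]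
  omega

theorem common_soc {L : ℕ} [Infinite K] {x z : RepSpace Q d K} (hx : x ∈ TruncRepVar Q d K L)
    (hz : z ∈ TruncRepVar Q d K L) (h : ∀ l i, rd x l i = rd z l i) :
    ∃ y ∈ TruncRepVar Q d K L, (∀ l i, rd y l i = rd x l i) ∧ (∀ l i, sd y l i ≤ sd x l i) ∧
      ∀ l i, sd y l i ≤ sd z l i := by
  obtain ⟨c, hc, h0, h1, hev⟩ := curve_exists hx hz h
  have e1 : ∀ᶠ t in cofinite, ∀ l ∈ Finset.range (L+1), ∀ i, sd (c t) l i ≤ sd x l i := by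
    rw [Filter.eventually_all_finset]
    intro l _
    rw [Filter.eventually_all]
    intro i
    exact curve_open hc (isOpen_sd l i (sd x l i)) (t0 := 0) (by rw [h0]; exact le_refl (sd x l i))
  have e2 : ∀ᶠ t in cofinite, ∀ l ∈ Finset.range (L+1), ∀ i, sd (c t) l i ≤ sd z l i := by
    rw [Filter.eventually_all_finset]
    intro l _
    rw [Filter.eventually_all]
    intro i
    exact curve_open hc (isOpen_sd l i (sd z l i)) (t0 := 1) (by rw [h1]; exact le_refl (sd z l i))
  obtain ⟨t, ⟨h2, h3⟩, h4, h5⟩ := (hev.and (e1.and e2)).exists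
  refine ⟨c t, h2, h3, fun l i => ?_, fun l i => ?_⟩
  · by_cases hl : l < L + 1
    · exact h4 l (Finset.mem_range.2 hl) i
    · rw [sd_top hx (by omega)]
      exact vdim_le _ _
  · by_cases hl : l < L + 1
    · exact h5 l (Finset.mem_range.2 hl) i
    · rw [sd_top hz (by omega)]
      exact vdim_le _ _

theorem common_rad {L : ℕ} [Infinite K] {x z : RepSpace Q d K} (hx : x ∈ TruncRepVar Q d K L)
    (hz : z ∈ TruncRepVar Q d K L) (h : ∀ l i, sd x l i = sd z l i) :
    ∃ y ∈ TruncRepVar Q d K L, (∀ l i, sd y l i = sd x l i) ∧ (∀ l i, rd x l i ≤ rd y l i) ∧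
      ∀ l i, rd z l i ≤ rd y l i := by
  obtain ⟨y, hy, h1, h2, h3⟩ := common_soc (Q := op Q) (tau_trunc hx) (tau_trunc hz)
    (fun l i => by
      have a1 := sd_add_rd x l i
      have a2 := sd_add_rd z l i
      have a3 := h l i
      omega)
  refine ⟨tauInv y, tauInv_trunc hy, fun l i => ?_, fun l i => ?_, fun l i => ?_⟩
  · have a1 := sd_add_rd x l i
    have a2 := sd_add_rd (tauInv y) l i
    have a3 := h1 l i
    rw [tau_tauInv] at a2
    omega
  · have a1 := sd_tau_add x l i
    have a2 := sd_tau_add (tauInv y) l i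
    have a3 := h2 l i
    rw [tau_tauInv] at a2
    omega
  · have a1 := sd_tau_add z l i
    have a2 := sd_tau_add (tauInv y) l i
    have a3 := h3 l i
    rw [tau_tauInv] at a2
    omega

/-- Second half of the theorem. -/
theorem second_half {L : ℕ} [Infinite K] {x : RepSpace Q d K} (hx : x ∈ TruncRepVar Q d K L)
    (hmin : ∀ y ∈ TruncRepVar Q d K L, (∀ l i, rd x l i ≤ rd y l i) →
      (∀ l i, sd y l i ≤ sd x l i) → (∀ l i, rd y l i = rd x l i) ∧ ∀ l i, sd y l i = sd x l i) :
    (∀ z ∈ TruncRepVar Q d K L, (∀ l i, rd z l i = rd x l i) → ∀ l i, sd x l i ≤ sd z l i) ∧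
    (∀ z ∈ TruncRepVar Q d K L, (∀ l i, sd z l i = sd x l i) → ∀ l i, rd z l i ≤ rd x l i) := by
  constructor
  · intro z hz h l i
    obtain ⟨y, hy, h1, h2, h3⟩ := common_soc hx hz (fun l i => (h l i).symm)
    rw [← (hmin y hy (fun l i => (h1 l i).ge) h2).2 l i]
    exact h3 l i
  · intro z hz h l i
    obtain ⟨y, hy, h1, h2, h3⟩ := common_rad hx hz (fun l i => (h l i).symm)
    rw [← (hmin y hy h2 (fun l i => (h1 l i).le)).1 l i]
    exact h3 l i

theorem exists_generic {L : ℕ} [Infinite K] {x : RepSpace Q d K} (hx : x ∈ TruncRepVar Q d K L) :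
    ∃ y ∈ TruncRepVar Q d K L, (∀ l i, rd y l i = rd x l i) ∧
      ∀ z ∈ TruncRepVar Q d K L, (∀ l i, rd z l i = rd x l i) → ∀ l i, sd y l i ≤ sd z l i := by
  classical
  set f : RepSpace Q d K → ℕ := fun y => ∑ l ∈ Finset.range (L+1), ∑ i, sd y l i with hf
  have hne : {y : RepSpace Q d K | y ∈ TruncRepVar Q d K L ∧
    ∀ l i, rd y l i = rd x l i}.Nonempty := ⟨x, hx, fun _ _ => rfl⟩
  set y := Function.argminOn f _ hne with hyd
  obtain ⟨hy1, hy2⟩ : y ∈ TruncRepVar Q d K L ∧ ∀ l i, rd y l i = rd x l i :=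
    Function.argminOn_mem f _ hne
  refine ⟨y, hy1, hy2, fun z hz hzr l i => ?_⟩
  obtain ⟨w, hw, h1, h2, h3⟩ := common_soc hy1 hz (fun l i => by rw [hy2, hzr])
  by_cases hl : l < L + 1
  · by_contra hlt
    push Not at hlt
    have : f w < f y := by
      apply Finset.sum_lt_sum (fun l _ => Finset.sum_le_sum fun i _ => h2 l i)
      refine ⟨l, Finset.mem_range.2 hl, Finset.sum_lt_sum (fun i _ => h2 l i) ⟨i, Finset.mem_univ i, ?_⟩⟩
      exact (h3 l i).trans_lt hlt
    exact Function.not_lt_argminOn f {y : RepSpace Q d K | y ∈ TruncRepVar Q d K L ∧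
      ∀ l i, rd y l i = rd x l i} (a := w) ⟨hw, fun l i => by rw [h1, hy2]⟩ this
  · rw [sd_top hz (by omega)]
    exact vdim_le _ _

end Dual
end QuiverData

section LinAlg2
variable {K : Type} [Field K]

theorem finrank_map_add_inf {V W : Type} [AddCommGroup V] [Module K V] [FiniteDimensional K V]
    [AddCommGroup W] [Module K W] (T : V →ₗ[K] W) (P : Submodule K V) :
    Module.finrank K (P.map T) + Module.finrank K (P ⊓ LinearMap.ker T : Submodule K V)
      = Module.finrank K P := by
  have h := LinearMap.finrank_range_add_finrank_ker (T.domRestrict P)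
  have h2 : LinearMap.range (T.domRestrict P) = P.map T := LinearMap.range_domRestrict P T
  have h3 : (LinearMap.ker (T.domRestrict P)).map P.subtype = P ⊓ LinearMap.ker T := by
    ext v
    simp [and_comm]
  rw [h2] at h
  rw [← h3, ← h]
  congr 1
  exact Submodule.finrank_map_subtype_eq P _

theorem finrank_submodule_pi {ι V : Type} [Fintype ι] [AddCommGroup V] [Module K V]
    [FiniteDimensional K V] (N : ι → Submodule K V) :
    Module.finrank K (Submodule.pi Set.univ N) = ∑ a, Module.finrank K (N a) := by
  have e : (Submodule.pi Set.univ N) ≃ₗ[K] (∀ a, N a) :=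
    { toFun := fun u a => ⟨u.1 a, u.2 a trivial⟩
      invFun := fun u => ⟨fun a => u a, fun a _ => (u a).2⟩
      map_add' := fun u v => rfl
      map_smul' := fun c u => rfl
      left_inv := fun u => rfl
      right_inv := fun u => rfl }
  rw [e.finrank_eq, Module.finrank_pi_fintype]

end LinAlg2
namespace QuiverData
section Degen
open Filter

/-- The arrow relation. -/
def Rel (Q : QuiverData) (j k : Fin Q.n) : Prop := ∃ a, Q.src a = j ∧ Q.tgt a = k

theorem path_of_transGen {Q : QuiverData} {j i : Fin Q.n} (h : Relation.TransGen (Rel Q) j i) :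
    ∃ a w, IsPathWord Q (a :: w) ∧ Q.tgt a = i ∧
      Q.src ((a :: w).getLast (List.cons_ne_nil a w)) = j := by
  induction h with
  | single h =>
    obtain ⟨a, h1, h2⟩ := h
    exact ⟨a, [], List.isChain_singleton a, h2, by simpa using h1⟩
  | tail h h' ih =>
    obtain ⟨a, w, h1, h2, h3⟩ := ih
    obtain ⟨b, h4, h5⟩ := h'
    refine ⟨b, a :: w, ?_, h5, ?_⟩
    · unfold IsPathWord at h1 ⊢
      exact List.isChain_cons_cons.2 ⟨by rw [h4, h2], h1⟩
    · rw [List.getLast_cons (List.cons_ne_nil a w)]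
      exact h3

theorem exists_rank {Q : QuiverData} (h : Acyclic Q) :
    ∃ ρ : Fin Q.n → ℕ, ∀ a, ρ (Q.src a) < ρ (Q.tgt a) := by
  classical
  refine ⟨fun i => (Finset.univ.filter fun j => Relation.TransGen (Rel Q) j i).card, fun a => ?_⟩
  apply Finset.card_lt_card
  have hs : Relation.TransGen (Rel Q) (Q.src a) (Q.tgt a) := .single ⟨a, rfl, rfl⟩
  rw [Finset.ssubset_iff_of_subset]
  · refine ⟨Q.src a, by simpa using hs, ?_⟩
    intro hc
    obtain ⟨b, w, h1, h2, h3⟩ := path_of_transGen (Finset.mem_filter.1 hc).2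
    exact h b w h1 (by rw [h2, h3])
  · intro j hj
    rw [Finset.mem_filter] at hj ⊢
    exact ⟨hj.1, hj.2.trans hs⟩

variable {Q : QuiverData} {d : Fin Q.n → ℕ} {K : Type} [Field K]

/-- Sum of all arrows into `i`. -/
noncomputable def inMap (x : RepSpace Q d K) (i : Fin Q.n) :
    ({a : Fin Q.numArrows // Q.tgt a = i} → Carrier Q d K) →ₗ[K] Carrier Q d K :=
  ∑ a : {a : Fin Q.numArrows // Q.tgt a = i}, arrowMap Q d K x a.1 ∘ₗ LinearMap.proj a

theorem inMap_apply (x : RepSpace Q d K) (i : Fin Q.n)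
    (u : {a : Fin Q.numArrows // Q.tgt a = i} → Carrier Q d K) :
    inMap x i u = ∑ a, arrowMap Q d K x a.1 (u a) := by
  simp [inMap]

/-- Families of elements of the `l`-th radical power at the sources of the arrows into `i`. -/
noncomputable def inFam (x : RepSpace Q d K) (i : Fin Q.n) (l : ℕ) :
    Submodule K ({a : Fin Q.numArrows // Q.tgt a = i} → Carrier Q d K) :=
  Submodule.pi Set.univ fun a => (radPow Q d K x l).map (proj Q d K (Q.src a.1))

theorem map_inFam (x : RepSpace Q d K) (i : Fin Q.n) (l : ℕ) :
    (inFam x i l).map (inMap x i) = (radPow Q d K x (l+1)).map (proj Q d K i) := by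
  classical
  apply le_antisymm
  · rintro _ ⟨u, hu, rfl⟩
    rw [inMap_apply]
    apply Submodule.sum_mem
    intro a _
    refine ⟨arrowMap Q d K x a.1 (u a), ?_, ?_⟩
    · apply arrowMap_mem_radPow
      exact (radPow_graded x l).map_proj_le _ (hu a trivial)
    · have := proj_arrowMap x a.1 (u a)
      rwa [a.2] at this
  · rw [Submodule.map_le_iff_le_comap, radPow_succ]
    apply iSup_le
    rintro a _ ⟨m, hm, rfl⟩
    rw [Submodule.mem_comap]
    by_cases ha : Q.tgt a = i
    · refine ⟨Pi.single ⟨a, ha⟩ (proj Q d K (Q.src a) m), ?_, ?_⟩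
      · intro b _
        by_cases hb : b = ⟨a, ha⟩
        · subst hb
          rw [Pi.single_eq_same]
          exact Submodule.mem_map_of_mem hm
        · rw [Pi.single_eq_of_ne hb]
          exact Submodule.zero_mem _
      · rw [inMap_apply, Fintype.sum_eq_single ⟨a, ha⟩]
        · rw [Pi.single_eq_same, arrowMap_apply_self]
          have := proj_arrowMap x a m
          rw [ha] at this
          exact this.symm
        · intro b hb
          rw [Pi.single_eq_of_ne hb, map_zero]
    · rw [proj_arrowMap_ne _ _ _ _ ha]
      exact Submodule.zero_mem _

theorem inFam_count (x : RepSpace Q d K) (i : Fin Q.n) (l : ℕ) :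
    rd x (l+1) i + Module.finrank K (inFam x i l ⊓ LinearMap.ker (inMap x i) :
      Submodule K ({a : Fin Q.numArrows // Q.tgt a = i} → Carrier Q d K))
      = ∑ a : {a : Fin Q.numArrows // Q.tgt a = i}, rd x l (Q.src a.1) := by
  have := finrank_map_add_inf (inMap x i) (inFam x i l)
  rw [map_inFam] at this
  refine this.trans ?_
  exact finrank_submodule_pi _

theorem inFam_anti (x : RepSpace Q d K) (i : Fin Q.n) (l : ℕ) :
    inFam x i (l+1) ≤ inFam x i l := fun _ hu a ha =>
  Submodule.map_mono (radPow_anti_succ x l) (hu a ha)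

theorem exists_family {x z : RepSpace Q d K} (i : Fin Q.n) (k : ℕ)
    (hs : ∀ a, Q.tgt a = i → ∀ l, rd x l (Q.src a) = rd z l (Q.src a))
    (h1 : rd x (k+1) i < rd z (k+1) i) (h2 : rd x (k+2) i = rd z (k+2) i) :
    ∃ u : {a : Fin Q.numArrows // Q.tgt a = i} → Carrier Q d K,
      (∀ a, u a ∈ radPow Q d K x k ∧ proj Q d K (Q.src a.1) (u a) = u a) ∧
      ∑ a, arrowMap Q d K x a.1 (u a) = 0 ∧ ∃ a, u a ∉ radPow Q d K x (k+1) := by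
  have c1 := inFam_count x i k
  have c2 := inFam_count x i (k+1)
  have c3 := inFam_count z i k
  have c4 := inFam_count z i (k+1)
  have e : ∀ l, ∑ a : {a : Fin Q.numArrows // Q.tgt a = i}, rd x l (Q.src a.1)
      = ∑ a : {a : Fin Q.numArrows // Q.tgt a = i}, rd z l (Q.src a.1) := fun l =>
    Finset.sum_congr rfl fun a _ => hs a.1 a.2 l
  rw [e] at c1 c2
  have m1 := Submodule.finrank_mono (inf_le_inf_right (LinearMap.ker (inMap z i)) (inFam_anti z i k))
  have : ¬ (inFam x i k ⊓ LinearMap.ker (inMap x i)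
      ≤ inFam x i (k+1) ⊓ LinearMap.ker (inMap x i)) := by
    intro hle
    have := Submodule.finrank_mono hle
    have h2' : rd x (k+1+1) i = rd z (k+1+1) i := h2
    omega
  rw [SetLike.not_le_iff_exists] at this
  obtain ⟨u, ⟨hu1, hu2⟩, hu3⟩ := this
  have hp : ∀ a, u a ∈ radPow Q d K x k ∧ proj Q d K (Q.src a.1) (u a) = u a := by
    intro a
    obtain ⟨m, hm, he⟩ := hu1 a trivial
    rw [← he]
    exact ⟨radPow_graded x k _ m hm, proj_proj _ _⟩
  refine ⟨u, hp, ?_, ?_⟩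
  · rw [← inMap_apply]
    exact hu2
  · by_contra hc
    push Not at hc
    refine hu3 ⟨fun a _ => ?_, hu2⟩
    exact ⟨u a, hc a, (hp a).2⟩

theorem degen (hac : Acyclic Q) {L : ℕ} {x z : RepSpace Q d K} (hx : x ∈ TruncRepVar Q d K L)
    (hz : z ∈ TruncRepVar Q d K L) (hr : ∀ l i, rd x l i ≤ rd z l i)
    (hs : ∀ l i, sd z l i ≤ sd x l i) (hne : ∃ i l, rd x l i ≠ rd z l i) :
    ∃ w : RepSpace Q d K, ∀ s : K, s ≠ 0 → (1 : K) • x + s • w ∈ TruncRepVar Q d K L ∧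
      ∃ l i, rd x l i < rd ((1 : K) • x + s • w) l i := by
  classical
  obtain ⟨ρ, hρ⟩ := exists_rank hac
  obtain ⟨i, hi, hmin⟩ := Finset.exists_min_image
    (Finset.univ.filter fun i => ∃ l, rd x l i ≠ rd z l i) ρ (by
      obtain ⟨i, hi⟩ := hne
      exact ⟨i, by simpa using hi⟩)
  have hlow : ∀ j, ρ j < ρ i → ∀ l, rd x l j = rd z l j := by
    intro j hj l
    by_contra hc
    exact absurd (hmin j (by simpa using ⟨l, hc⟩)) (by omega)
  rw [Finset.mem_filter] at hi
  have hbd : ∀ l, rd x l i ≠ rd z l i → l < L + 1 := by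
    intro l hl
    by_contra hc
    exact hl (by rw [rd_top hx (by omega), rd_top hz (by omega)])
  obtain ⟨l0, hl0, hmax⟩ := Finset.exists_max_image
    ((Finset.range (L+1)).filter fun l => rd x l i ≠ rd z l i) (fun l => l) (by
      obtain ⟨l, hl⟩ := hi.2
      exact ⟨l, by simpa using ⟨by have := hbd l hl; omega, hl⟩⟩)
  rw [Finset.mem_filter, Finset.mem_range] at hl0
  obtain ⟨hl0L, hl0ne⟩ := hl0
  have hl0pos : l0 ≠ 0 := by
    rintro rfl
    exact hl0ne (by rw [rd_zero, rd_zero])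
  obtain ⟨k, rfl⟩ := Nat.exists_eq_succ_of_ne_zero hl0pos
  rw [Nat.succ_eq_add_one] at *
  have hnext : rd x (k+2) i = rd z (k+2) i := by
    by_contra hc
    have := hmax (k+2) (by rw [Finset.mem_filter, Finset.mem_range]; exact ⟨hbd _ hc, hc⟩)
    omega
  have hlt : rd x (k+1) i < rd z (k+1) i := lt_of_le_of_ne (hr _ _) hl0ne
  obtain ⟨u, hu1, hu2, a1, ha1⟩ := exists_family i k
    (fun a ha l => hlow _ (by rw [← ha]; exact hρ a) l) hlt hnext
  -- the vector `m`
  have hm : ∃ m, m ∈ soc' x (L-k) ∧ proj Q d K i m = m ∧ m ∉ radPow Q d K x (k+1) := by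
    have h1 : rd z (k+1) i ≤ sd z (L-k) i := by
      apply vdim_mono
      apply radPow_le_soc'
      rw [show k + 1 + (L - k) = L + 1 by omega]
      exact (mem_trunc_iff L z).1 hz
    have h2 : rd x (k+1) i < sd x (L-k) i := hlt.trans_le (h1.trans (hs _ _))
    have h3 : ¬ ((soc' x (L-k)).map (proj Q d K i) ≤ (radPow Q d K x (k+1)).map (proj Q d K i)) := by
      intro hle
      exact absurd (Submodule.finrank_mono hle) (not_le.2 h2)
    rw [SetLike.not_le_iff_exists] at h3
    obtain ⟨_, ⟨m, hm, rfl⟩, hm2⟩ := h3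
    refine ⟨proj Q d K i m, soc'_graded x _ i m hm, proj_proj _ _, fun hc => hm2 ?_⟩
    exact ⟨proj Q d K i m, hc, proj_proj _ _⟩
  obtain ⟨m, hm1, hm2, hm3⟩ := hm
  obtain ⟨f, hf1, hf2⟩ := Submodule.exists_le_ker_of_notMem ha1
  set ξ : Carrier Q d K →ₗ[K] K := f ∘ₗ proj Q d K (Q.src a1.1) with hξ
  have hξu : ξ (u a1) ≠ 0 := by
    rw [hξ, LinearMap.comp_apply, (hu1 a1).2]
    exact hf1
  have hξr : ∀ v ∈ radPow Q d K x (k+1), ξ v = 0 := fun v hv =>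
    hf2 (radPow_graded x (k+1) _ v hv)
  set w : RepSpace Q d K := ofEnd (fun a => if a = a1.1 then ξ.smulRight m else 0) with hw
  have hw1 : ∀ v, arrowMap Q d K w a1.1 v = ξ v • m := by
    intro v
    rw [hw, arrowMap_ofEnd, if_pos rfl, LinearMap.smulRight_apply, map_smul, a1.2, hm2, hξ,
      LinearMap.comp_apply, LinearMap.comp_apply, proj_proj]
  have hw2 : ∀ a v, a ≠ a1.1 → arrowMap Q d K w a v = 0 := by
    intro a v ha
    rw [hw, arrowMap_ofEnd, if_neg ha, LinearMap.zero_apply, map_zero]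
  refine ⟨w, fun s hs0 => ?_⟩
  set y : RepSpace Q d K := (1 : K) • x + s • w with hy
  have hy1 : ∀ v, arrowMap Q d K y a1.1 v = arrowMap Q d K x a1.1 v + (s * ξ v) • m := by
    intro v
    rw [hy, arrowMap_lin, hw1, one_smul, mul_smul]
  have hy2 : ∀ a v, a ≠ a1.1 → arrowMap Q d K y a v = arrowMap Q d K x a v := by
    intro a v ha
    rw [hy, arrowMap_lin, hw2 a v ha, one_smul, smul_zero, add_zero]
  constructor
  · -- truncation
    set Up : Submodule K (Carrier Q d K) :=
      ⨅ j : {j : Fin Q.n // ρ j < ρ i}, LinearMap.ker (proj Q d K j.1) with hUp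
    have hUpm : ∀ v, v ∈ Up ↔ ∀ j, ρ j < ρ i → proj Q d K j v = 0 := by
      intro v
      rw [hUp, Submodule.mem_iInf]
      exact ⟨fun h j hj => h ⟨j, hj⟩, fun h j => h j.1 j.2⟩
    have key := radPow_le_of y
      (fun l => radPow Q d K x l ⊔ (soc' x (L+1-l) ⊓ Up)) (by simp [radPow_zero]) (by
        intro l a v hv
        obtain ⟨v1, hv1, v2, ⟨hv2, hv3⟩, rfl⟩ := Submodule.mem_sup.1 hv
        rw [map_add]
        apply Submodule.add_mem
        · have e1 : arrowMap Q d K x a v1 ∈ radPow Q d K x (l+1) ⊔ (soc' x (L+1-(l+1)) ⊓ Up) :=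
            Submodule.mem_sup_left (arrowMap_mem_radPow x l a hv1)
          by_cases ha : a = a1.1
          · subst ha
            rw [hy1]
            apply Submodule.add_mem _ e1
            by_cases hl : l ≤ k
            · apply Submodule.smul_mem
              apply Submodule.mem_sup_right
              refine ⟨soc'_mono x (by omega) hm1, ?_⟩
              rw [SetLike.mem_coe, hUpm]
              intro j hj
              rw [← hm2]
              apply proj_proj_ne
              rintro rfl
              omega
            · rw [hξr v1 (radPow_antitone x (by omega) hv1), mul_zero, zero_smul]
              exact Submodule.zero_mem _
          · rw [hy2 a v1 ha]
            exact e1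
        · have e0 : arrowMap Q d K y a v2 = arrowMap Q d K x a v2 := by
            by_cases ha : a = a1.1
            · subst ha
              have : ξ v2 = 0 := by
                rw [hξ, LinearMap.comp_apply, (hUpm v2).1 hv3 _ (by
                  have := hρ a1.1
                  rwa [a1.2] at this), map_zero]
              rw [hy1, this, mul_zero, zero_smul, add_zero]
            · exact hy2 a v2 ha
          rw [e0]
          apply Submodule.mem_sup_right
          refine ⟨?_, ?_⟩
          · by_cases hl : l ≤ L
            · rw [show L + 1 - l = (L + 1 - (l+1)) + 1 by omega] at hv2
              exact (mem_soc'_succ x _ v2).1 hv2 a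
            · rw [show L + 1 - l = 0 by omega] at hv2
              have : v2 = 0 := (Submodule.mem_bot K).1 hv2
              rw [this, map_zero]
              exact Submodule.zero_mem _
          · rw [SetLike.mem_coe, hUpm]
            intro j hj
            by_cases hja : Q.tgt a = j
            · rw [← arrowMap_apply_self, (hUpm v2).1 hv3 _ (by
                have := hρ a
                rw [hja] at this
                omega), map_zero, map_zero]
            · exact proj_arrowMap_ne _ _ _ _ hja) (L+1)
    rw [mem_trunc_iff, eq_bot_iff]
    refine key.trans ?_
    simp only [Nat.sub_self]
    rw [(mem_trunc_iff L x).1 hx]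
    simp [soc']
  · have low : ∀ l, ∀ v ∈ radPow Q d K x l, ∀ j, ρ j < ρ i → proj Q d K j v ∈ radPow Q d K y l := by
      intro l
      induction l with
      | zero =>
        intro v _ j _
        rw [radPow_zero]
        trivial
      | succ l ih =>
        intro v hv j hj
        rw [radPow_succ] at hv
        induction hv using Submodule.iSup_induction' with
        | mem a v hv =>
          obtain ⟨v', hv', rfl⟩ := hv
          by_cases hja : Q.tgt a = j
          · rw [← hja, proj_arrowMap, ← arrowMap_apply_self, ← hy2]
            · apply arrowMap_mem_radPow
              apply ih v' hv'
              have := hρ a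
              rw [hja] at this
              omega
            · rintro rfl
              rw [a1.2] at hja
              rw [hja] at hj
              omega
          · rw [proj_arrowMap_ne _ _ _ _ hja]
            exact Submodule.zero_mem _
        | zero => rw [map_zero]; exact Submodule.zero_mem _
        | add u v _ _ hu hv => rw [map_add]; exact Submodule.add_mem _ hu hv
    have hmy : m ∈ radPow Q d K y (k+1) := by
      have h1 : ∑ a, arrowMap Q d K y a.1 (u a) = (s * ξ (u a1)) • m := by
        have : ∀ a, arrowMap Q d K y a.1 (u a)
            = arrowMap Q d K x a.1 (u a) + if a = a1 then (s * ξ (u a1)) • m else 0 := by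
          intro a
          by_cases ha : a = a1
          · subst ha
            rw [if_pos rfl, hy1]
          · rw [if_neg ha, add_zero, hy2 _ _ (fun h => ha (Subtype.ext h))]
        rw [Finset.sum_congr rfl fun a _ => this a, Finset.sum_add_distrib, hu2, zero_add,
          Finset.sum_ite_eq' Finset.univ a1, if_pos (Finset.mem_univ _)]
      have h2 : ∑ a, arrowMap Q d K y a.1 (u a) ∈ radPow Q d K y (k+1) := by
        apply Submodule.sum_mem
        intro a _
        apply arrowMap_mem_radPow
        rw [← (hu1 a).2]
        apply low k _ (hu1 a).1
        have := hρ a.1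
        rwa [a.2] at this
      rw [h1] at h2
      exact (Submodule.smul_mem_iff _ (mul_ne_zero hs0 hξu)).1 h2
    have hle : ∀ v ∈ radPow Q d K x (k+1), proj Q d K i v ∈ radPow Q d K y (k+1) := by
      intro v hv
      rw [radPow_succ] at hv
      induction hv using Submodule.iSup_induction' with
      | mem a v hv =>
        obtain ⟨v', hv', rfl⟩ := hv
        by_cases hja : Q.tgt a = i
        · have e1 : arrowMap Q d K y a (proj Q d K (Q.src a) v') ∈ radPow Q d K y (k+1) := by
            apply arrowMap_mem_radPow
            apply low k _ hv'
            have := hρ a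
            rwa [hja] at this
          rw [arrowMap_apply_self] at e1
          rw [← hja, proj_arrowMap]
          by_cases ha : a = a1.1
          · subst ha
            rw [hy1] at e1
            exact (Submodule.add_mem_iff_left _ (Submodule.smul_mem _ _ hmy)).1 e1
          · rwa [hy2 a v' ha] at e1
        · rw [proj_arrowMap_ne _ _ _ _ hja]
          exact Submodule.zero_mem _
      | zero => rw [map_zero]; exact Submodule.zero_mem _
      | add u v _ _ hu hv => rw [map_add]; exact Submodule.add_mem _ hu hv
    refine ⟨k+1, i, vdim_lt i (m := m) ?_ ⟨m, hmy, hm2⟩ ?_⟩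
    · rintro _ ⟨v, hv, rfl⟩
      exact ⟨proj Q d K i v, hle v hv, proj_proj _ _⟩
    · intro hc
      exact hm3 ((radPow_graded x (k+1)).map_proj_le i hc)

end Degen
end QuiverData

namespace QuiverData
section Assembly
open Filter
variable {Q : QuiverData} {d : Fin Q.n → ℕ} {K : Type} [Field K] {L : ℕ}

/-- `Rep S` inside the truncated variety. -/
def RS (Q : QuiverData) (d : Fin Q.n → ℕ) (K : Type) [Field K] {L : ℕ}
    (S : Fin (L+1) → Fin Q.n → ℕ) : Set (TruncV Q d K L) :=
  {x | radLayering Q d K L x.1 = S}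

theorem mem_RS (x : TruncV Q d K L) : x ∈ RS Q d K (radLayering Q d K L x.1) := rfl

theorem RS_preirreducible [Infinite K] (S : Fin (L+1) → Fin Q.n → ℕ) :
    IsPreirreducible (RS Q d K S) := by
  rintro u v hu hv ⟨x, hx, hxu⟩ ⟨z, hz, hzv⟩
  obtain ⟨U, hU, rfl⟩ := isOpen_induced_iff.1 hu
  obtain ⟨V, hV, rfl⟩ := isOpen_induced_iff.1 hv
  have hxz : ∀ l i, rd x.1 l i = rd z.1 l i :=
    (rad_eq_iff x.2 z.2).1 (Eq.trans hx (Eq.symm hz))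
  obtain ⟨c, hc, h0, h1, hev⟩ := curve_exists x.2 z.2 hxz
  have e1 := curve_open hc hU (t0 := 0) (by rw [h0]; exact hxu)
  have e2 := curve_open hc hV (t0 := 1) (by rw [h1]; exact hzv)
  obtain ⟨t, ⟨h2, h3⟩, h4, h5⟩ := (hev.and (e1.and e2)).exists
  exact ⟨⟨c t, h2⟩, ((rad_eq_iff h2 x.2).2 h3).trans hx, h4, h5⟩

theorem closure_RS_irreducible [Infinite K] (x : TruncV Q d K L) :
    IsIrreducible (closure (RS Q d K (radLayering Q d K L x.1))) :=
  ⟨⟨x, subset_closure rfl⟩, (RS_preirreducible _).closure⟩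

theorem rd_le_of_mem_closure {x y : TruncV Q d K L}
    (h : x ∈ closure (RS Q d K (radLayering Q d K L y.1))) (l : ℕ) (i : Fin Q.n) :
    rd x.1 l i ≤ rd y.1 l i := by
  rw [mem_closure_iff] at h
  obtain ⟨w, hw1, hw2⟩ := h _ ((isOpen_rd l i (rd x.1 l i)).preimage continuous_subtype_val)
    (show rd x.1 l i ≤ rd x.1 l i from le_rfl)
  have h1 : rd x.1 l i ≤ rd w.1 l i := hw1
  rwa [(rad_eq_iff w.2 y.2).1 hw2 l i] at h1

theorem sd_of_mem_closure {x y : TruncV Q d K L}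
    (h : x ∈ closure (RS Q d K (radLayering Q d K L y.1))) (l : ℕ) (i : Fin Q.n) :
    ∃ w : TruncV Q d K L, (∀ l i, rd w.1 l i = rd y.1 l i) ∧ sd w.1 l i ≤ sd x.1 l i := by
  rw [mem_closure_iff] at h
  obtain ⟨w, hw1, hw2⟩ := h _ ((isOpen_sd l i (sd x.1 l i)).preimage continuous_subtype_val)
    (show sd x.1 l i ≤ sd x.1 l i from le_rfl)
  exact ⟨w, (rad_eq_iff w.2 y.2).1 hw2, hw1⟩

theorem finite_layerings (A : Set (TruncV Q d K L)) :
    ((fun x : TruncV Q d K L => radLayering Q d K L x.1) '' A).Finite := by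
  refine (Set.finite_Iic (fun (_ : Fin (L+1)) i => d i)).subset ?_
  rintro _ ⟨x, _, rfl⟩ l i
  simp only [radLayering_apply]
  exact (Nat.sub_le _ _).trans (vdim_le _ _)

theorem irreducible_cover {Z A : Set (TruncV Q d K L)} (hZ : IsIrreducible Z)
    (hZA : Z ⊆ closure A) :
    ∃ y ∈ A, Z ⊆ closure (RS Q d K (radLayering Q d K L y.1)) := by
  classical
  set t := ((finite_layerings A).image fun S => closure (RS Q d K S)).toFinset with ht
  have hcl : ∀ z ∈ t, IsClosed z := by
    intro z hz
    rw [ht, Set.Finite.mem_toFinset] at hz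
    obtain ⟨S, _, rfl⟩ := hz
    exact isClosed_closure
  have hsub : closure A ⊆ ⋃₀ (t : Set (Set (TruncV Q d K L))) := by
    apply closure_minimal
    · intro x hx
      refine ⟨closure (RS Q d K (radLayering Q d K L x.1)), ?_, subset_closure rfl⟩
      rw [ht, Set.Finite.coe_toFinset]
      exact ⟨_, ⟨x, hx, rfl⟩, rfl⟩
    · rw [Set.sUnion_eq_biUnion]
      exact Set.Finite.isClosed_biUnion t.finite_toSet hcl
  obtain ⟨z, hz, h⟩ := isIrreducible_iff_sUnion_isClosed.1 hZ t hcl (hZA.trans hsub)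
  rw [ht, Set.Finite.mem_toFinset] at hz
  obtain ⟨_, ⟨y, hy, rfl⟩, rfl⟩ := hz
  exact ⟨y, hy, h⟩

theorem degen_closure [Infinite K] (hac : Acyclic Q) {x z : TruncV Q d K L}
    (hr : ∀ l i, rd x.1 l i ≤ rd z.1 l i)
    (hs : ∀ l i, sd z.1 l i ≤ sd x.1 l i) (hne : ∃ i l, rd x.1 l i ≠ rd z.1 l i) :
    x ∈ closure {y : TruncV Q d K L | ∃ l i, rd x.1 l i < rd y.1 l i} := by
  obtain ⟨w, hw⟩ := degen hac x.2 z.2 hr hs hne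
  rw [mem_closure_iff]
  intro o ho hxo
  obtain ⟨U, hU, rfl⟩ := isOpen_induced_iff.1 ho
  have hc : ∀ k, (fun t : K => ((1 : K) • x.1 + t • w) k) ∈ polyCur K := by
    intro k
    exact (polyCur K).add_mem (const_mem_alg _ ((1 : K) • x.1 k))
      ((polyCur K).mul_mem id_mem_polyCur (const_mem_alg _ (w k)))
  have e1 := curve_open hc hU (t0 := 0) (by simpa using hxo)
  have e2 : ∀ᶠ t : K in cofinite, t ≠ 0 :=
    polyCur_cofinite id_mem_polyCur (t0 := 1) one_ne_zero
  obtain ⟨t, h1, h2⟩ := (e1.and e2).exists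
  exact ⟨⟨_, (hw t h2).1⟩, h1, (hw t h2).2⟩

theorem dominates_trans {n : ℕ} {S S' S'' : Fin (L+1) → Fin n → ℕ} (h : dominates S S')
    (h' : dominates S' S'') : dominates S S'' := fun l i => (h l i).trans (h' l i)

theorem forward [Infinite K] (hac : Acyclic Q) (S Sstar : Fin (L+1) → Fin Q.n → ℕ)
    (hgen : GenSoc Q d K L
      {x | x ∈ TruncRepVar Q d K L ∧ radLayering Q d K L x = S} Sstar)
    (hcomp : closure (RS Q d K S) ∈ irreducibleComponents (TruncV Q d K L))
    (S' Sstar' : Fin (L+1) → Fin Q.n → ℕ)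
    (hgen' : GenSoc Q d K L
      {x | x ∈ TruncRepVar Q d K L ∧ radLayering Q d K L x = S'} Sstar')
    (hd : dominates S' S) (hd' : dominates Sstar' Sstar) : S' = S ∧ Sstar' = Sstar := by
  obtain ⟨hg1, x0, ⟨hx0, rfl⟩, rfl⟩ := hgen
  obtain ⟨hg1', z, ⟨hz, rfl⟩, rfl⟩ := hgen'
  by_cases heq : radLayering Q d K L z = radLayering Q d K L x0
  · refine ⟨heq, ?_⟩
    have h1 := (dominates_soc_iff hz).1 (hg1 z ⟨hz, heq⟩)
    have h2 := (dominates_soc_iff hx0).1 hd'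
    exact (soc_eq_iff hz hx0).2 fun l i => le_antisymm (h2 l i) (h1 l i)
  · exfalso
    set A : Set (TruncV Q d K L) := {y | ∃ l i, rd x0 l i < rd y.1 l i} with hA
    have hsub : RS Q d K (radLayering Q d K L x0) ⊆ closure A := by
      intro x hx
      have hxr := (rad_eq_iff x.2 hx0).1 hx
      have h1 : ∀ l i, rd x.1 l i ≤ rd z l i := fun l i => by
        rw [hxr]; exact (dominates_rad_iff hx0).1 hd l i
      have h2 : ∀ l i, sd z l i ≤ sd x.1 l i :=
        (dominates_soc_iff x.2).1 (dominates_trans hd' (hg1 x.1 ⟨x.2, hx⟩))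
      have h3 : ∃ i l, rd x.1 l i ≠ rd z l i := by
        by_contra hc
        push Not at hc
        exact heq ((rad_eq_iff hz hx0).2 fun l i => by rw [← hc, hxr])
      have := degen_closure hac (z := ⟨z, hz⟩) h1 h2 h3
      simp only [hxr] at this
      exact this
    have hmax : Maximal IsIrreducible (closure (RS Q d K (radLayering Q d K L x0))) := hcomp
    obtain ⟨y, hy, hyc⟩ := irreducible_cover hmax.1 (closure_minimal hsub isClosed_closure)
    have h4 := hmax.2 (closure_RS_irreducible y) hyc
    have h5 := rd_le_of_mem_closure (y := ⟨x0, hx0⟩) (h4 (subset_closure rfl) : y ∈ _)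
    obtain ⟨l, i, hli⟩ := hy
    exact absurd (h5 l i) (not_le.2 hli)

theorem backward [Infinite K] (S Sstar : Fin (L+1) → Fin Q.n → ℕ)
    (hgen : GenSoc Q d K L
      {x | x ∈ TruncRepVar Q d K L ∧ radLayering Q d K L x = S} Sstar)
    (hmin : ∀ (S' Sstar' : Fin (L+1) → Fin Q.n → ℕ), hasDimVec S' d →
          GenSoc Q d K L
            {x | x ∈ TruncRepVar Q d K L ∧ radLayering Q d K L x = S'} Sstar' →
          dominates S' S → dominates Sstar' Sstar → (S' = S ∧ Sstar' = Sstar)) :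
    closure (RS Q d K S) ∈ irreducibleComponents (TruncV Q d K L) := by
  obtain ⟨hg1, x0, ⟨hx0, rfl⟩, rfl⟩ := hgen
  suffices hmax : Maximal IsIrreducible
      (closure (RS Q d K (radLayering Q d K L (⟨x0, hx0⟩ : TruncV Q d K L).1))) from hmax
  refine ⟨closure_RS_irreducible ⟨x0, hx0⟩, fun Z hZ hle => ?_⟩
  obtain ⟨y, -, hy⟩ := irreducible_cover (A := Set.univ) hZ (by simp)
  have hx0y : (⟨x0, hx0⟩ : TruncV Q d K L) ∈ closure (RS Q d K (radLayering Q d K L y.1)) :=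
    hy (hle (subset_closure (mem_RS ⟨x0, hx0⟩)))
  obtain ⟨y', hy', h1, h2⟩ := exists_generic y.2
  have hrd : ∀ l i, rd x0 l i ≤ rd y.1 l i := fun l i =>
    rd_le_of_mem_closure (x := (⟨x0, hx0⟩ : TruncV Q d K L)) (y := y) hx0y l i
  have k1 : GenSoc Q d K L {x | x ∈ TruncRepVar Q d K L ∧
      radLayering Q d K L x = radLayering Q d K L y.1} (socLayering Q d K L y') := by
    constructor
    · intro w hw
      have hw' : w ∈ TruncRepVar Q d K L ∧
        radLayering Q d K L w = radLayering Q d K L y.1 := hw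
      exact (dominates_soc_iff hw'.1).2 (h2 w hw'.1 ((rad_eq_iff hw'.1 y.2).1 hw'.2))
    · exact ⟨y', ⟨hy', (rad_eq_iff hy' y.2).2 h1⟩, rfl⟩
  have k2 : dominates (radLayering Q d K L y.1) (radLayering Q d K L x0) :=
    (dominates_rad_iff hx0).2 hrd
  have k3 : dominates (socLayering Q d K L y') (socLayering Q d K L x0) := by
    apply (dominates_soc_iff hx0).2
    intro l i
    obtain ⟨w, hw1, hw2⟩ := sd_of_mem_closure (x := (⟨x0, hx0⟩ : TruncV Q d K L)) (y := y) hx0y l i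
    exact (h2 w.1 w.2 hw1 l i).trans hw2
  have key := hmin _ _ (hasDimVec_rad y.2) k1 k2 k3
  have h3 : radLayering Q d K L y.1 = radLayering Q d K L x0 := key.1
  intro p hp
  have h4 := hy hp
  rw [h3] at h4
  exact h4

end Assembly
end QuiverData


open QuiverData in
/-- Let `Λ` be a truncated path algebra whose quiver is acyclic, `S` a
`d`-dimensional (realizable) semisimple sequence and `S*` the generic socle layering of
`Rep S`. Then the closure of `Rep S` is an irreducible component of `Rep_d(Λ)` iff
`(S, S*)` is a minimal element of the set of pairs `(Ŝ, Ŝ*)` with `Ŝ` realizable of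
dimension vector `d` and `Ŝ*` the generic socle layering of `Rep Ŝ`. Moreover, whenever
the value `(S(M_x), S*(M_x))` of `Θ` at a point `x` is minimal in the image of `Θ`, then
`S*(M_x)` is the generic socle layering of `Rep S(M_x)` and `S(M_x)` is the generic
radical layering of the modules with socle layering `S*(M_x)`. -/
theorem statement_15 (K : Type) [Field K] [IsAlgClosed K]
    (Q : QuiverData) (L : ℕ) (hL : 0 < L) (hacyc : Acyclic Q)
    (d : Fin Q.n → ℕ) (S Sstar : Fin (L+1) → Fin Q.n → ℕ) (hS : hasDimVec S d)
    (hgen : GenSoc Q d K L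
      {x | x ∈ TruncRepVar Q d K L ∧ radLayering Q d K L x = S} Sstar) :
    ((closure {x : TruncV Q d K L | radLayering Q d K L x.1 = S}
        ∈ irreducibleComponents (TruncV Q d K L))
      ↔ ∀ (S' Sstar' : Fin (L+1) → Fin Q.n → ℕ), hasDimVec S' d →
          GenSoc Q d K L
            {x | x ∈ TruncRepVar Q d K L ∧ radLayering Q d K L x = S'} Sstar' →
          dominates S' S → dominates Sstar' Sstar → (S' = S ∧ Sstar' = Sstar)) ∧
    ∀ x : TruncV Q d K L,
      (∀ y : TruncV Q d K L,
        dominates (radLayering Q d K L y.1) (radLayering Q d K L x.1) →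
        dominates (socLayering Q d K L y.1) (socLayering Q d K L x.1) →
        (radLayering Q d K L y.1 = radLayering Q d K L x.1 ∧
          socLayering Q d K L y.1 = socLayering Q d K L x.1)) →
      (GenSoc Q d K L
          {z | z ∈ TruncRepVar Q d K L ∧
            radLayering Q d K L z = radLayering Q d K L x.1}
          (socLayering Q d K L x.1) ∧
        ∀ z ∈ TruncRepVar Q d K L,
          socLayering Q d K L z = socLayering Q d K L x.1 →
          dominates (radLayering Q d K L x.1) (radLayering Q d K L z)) := by
  haveI : Infinite K := IsAlgClosed.instInfinite
  refine ⟨⟨fun hcomp S' Sstar' _ hg hd hd' =>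
    forward hacyc S Sstar hgen hcomp S' Sstar' hg hd hd',
    fun hmin => backward S Sstar hgen hmin⟩, ?_⟩
  intro x hmin
  have hm : ∀ y ∈ TruncRepVar Q d K L, (∀ l i, rd x.1 l i ≤ rd y l i) →
      (∀ l i, sd y l i ≤ sd x.1 l i) →
      (∀ l i, rd y l i = rd x.1 l i) ∧ ∀ l i, sd y l i = sd x.1 l i := by
    intro y hy h1 h2
    have h3 := hmin ⟨y, hy⟩ ((dominates_rad_iff x.2).2 h1) ((dominates_soc_iff x.2).2 h2)
    exact ⟨(rad_eq_iff hy x.2).1 h3.1, (soc_eq_iff hy x.2).1 h3.2⟩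
  obtain ⟨h1, h2⟩ := second_half x.2 hm
  refine ⟨⟨?_, x.1, ⟨x.2, rfl⟩, rfl⟩, ?_⟩
  · rintro z ⟨hz, hzr⟩
    exact (dominates_soc_iff hz).2 (h1 z hz ((rad_eq_iff hz x.2).1 hzr))
  · intro z hz hzs
    exact (dominates_rad_iff hz).2 (h2 z hz ((soc_eq_iff hz x.2).1 hzs))
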